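/- Fix s ∈ [0,1] and let n range over positive integers. For each n, among the Ap₁-orbit classes in ID₀(n) (those orbits of D(n) containing a quadruple with a nonpositive entry), the proportion of classes whose representative q satisfies MC(q) ≤ s·n tends to s as n → ∞. In other words, the heights MC(q)/n of the classes in ID₀(n) equidistribute uniformly on the interval [0,1] as n → ∞. -/

import Mathlib

open Matrix

/-- The Apollonian generators. -/
def S₁ : Matrix (Fin 4) (Fin 4) ℤ := !![-1,2,2,2; 0,1,0,0; 0,0,1,0; 0,0,0,1]
def S₂ : Matrix (Fin 4) (Fin 4) ℤ := !![1,0,0,0; 2,-1,2,2; 0,0,1,0; 0,0,0,1]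
def S₃ : Matrix (Fin 4) (Fin 4) ℤ := !![1,0,0,0; 0,1,0,0; 2,2,-1,2; 0,0,0,1]
def S₄ : Matrix (Fin 4) (Fin 4) ℤ := !![1,0,0,0; 0,1,0,0; 0,0,1,0; 2,2,2,-1]

/-- The permutation matrix swapping coordinates 2 and 3. -/
def P₂₃ : Matrix (Fin 4) (Fin 4) ℤ := !![1,0,0,0; 0,0,1,0; 0,1,0,0; 0,0,0,1]

/-- The permutation matrix swapping coordinates 2 and 4. -/
def P₂₄ : Matrix (Fin 4) (Fin 4) ℤ := !![1,0,0,0; 0,0,0,1; 0,0,1,0; 0,1,0,0]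

/-- The group `Ap₁` generated by `P₂₃`, `P₂₄`, `S₄`; since the generators are
involutions, it consists exactly of all finite products of the generators. -/
def Ap₁ : Submonoid (Matrix (Fin 4) (Fin 4) ℤ) := Submonoid.closure {P₂₃, P₂₄, S₄}

/-- The extended Apollonian group, generated by `S₁, S₂, S₃, S₄` and all `4 × 4`
permutation matrices; the generating set is closed under inverses, so the group
consists of all finite products of generators. -/
def Apfull : Submonoid (Matrix (Fin 4) (Fin 4) ℤ) :=
  Submonoid.closure ({S₁, S₂, S₃, S₄} ∪ {M | ∃ σ : Equiv.Perm (Fin 4), M = σ.permMatrix ℤ})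

/-- The set of primitive integral Descartes quadruples `(n, a, b, c)` with
`n + a ≥ 0` and `n + b ≥ 0`. -/
def DSet (n : ℤ) : Set (Fin 4 → ℤ) :=
  {q | q 0 = n ∧
    Int.gcd (Int.gcd (Int.gcd (q 0) (q 1) : ℤ) (q 2) : ℤ) (q 3) = 1 ∧
    (q 0 + q 1 + q 2 + q 3) ^ 2 = 2 * ((q 0) ^ 2 + (q 1) ^ 2 + (q 2) ^ 2 + (q 3) ^ 2) ∧
    0 ≤ q 0 + q 1 ∧ 0 ≤ q 0 + q 2}

/-- The set of `Ap₁`-orbits of elements of `D(n)`. -/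
def ID (n : ℤ) : Set (Set (Fin 4 → ℤ)) :=
  {O | ∃ q ∈ DSet n, O = {q' | ∃ M ∈ Ap₁, q' = M.mulVec q}}

/-- The orbits containing a quadruple with a nonpositive entry. -/
def ID₀ (n : ℤ) : Set (Set (Fin 4 → ℤ)) :=
  {O ∈ ID n | ∃ q ∈ O, ∃ i : Fin 4, q i ≤ 0}

/-- The negative of the minimal curvature in the packing generated by `q`:
the supremum of `−(Mq)₁` over `M` in the extended Apollonian group. -/
noncomputable def MC (q : Fin 4 → ℤ) : ℝ :=
  sSup {x : ℝ | ∃ M ∈ Apfull, x = -(((M.mulVec q) 0 : ℤ) : ℝ)}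

/-!
A quadruple `(n, a, b, c)` in `DSet n` is given by the values, shifted by `n`, of a primitive binary
quadratic form `A x² + 2 H x y + B y²` of determinant `n²` at `(1, 0)`, `(0, 1)` and `(1, -1)`, and
`Ap₁` acts by changes of basis. Reduction of forms matches the orbits in `ID₀ n` with the pairs
`(A, H)`, `0 ≤ 2 H ≤ A ≤ n`, for which the form is primitive. The entry `A - n` is then the minimal
curvature, so `MC = n - A`, and it remains to show that the number of such pairs with `A ≤ X` is
asymptotically proportional to `X`, uniformly for `X ≤ n`.

The number `ρ(A)` of residues `H` modulo `A` for which the form exists and is primitive is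
multiplicative in `A`. It is the convolution of a function supported on the integers all of whose
prime factors divide `2 n` with the restriction of `1 ∗ χ₄ ∗ μ_□` to the integers coprime to `2 n`,
where `μ_□ (d ^ 2) = μ d`. The first factor contributes only `n^{o(1)}`, because there are only
`n^{o(1)}` such integers up to `n`. The hyperbola method then gives
`∑ A ≤ X, ρ(A) = c_n X + O(n^{1/2 + o(1)})` for `X ≤ n`, while the total is at least `n^{1 - o(1)}`
by comparison with `n = 1`, where coprime pairs `(u, v)` give roots of `H² + 1` modulo `u² + v²`.
-/

/-! ### Numbers composed of the primes dividing a fixed integer -/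

lemma rpow_neg_lt_one {ε x : ℝ} (hε : 0 < ε) (hx : 1 < x) : x ^ (-ε) < 1 :=
  Real.rpow_lt_one_of_one_lt_of_neg hx (neg_neg_of_pos hε)

lemma inv_one_sub_rpow_neg_anti {ε x y : ℝ} (hε : 0 < ε) (hx : 1 < x) (hxy : x ≤ y) :
    (1 - y ^ (-ε))⁻¹ ≤ (1 - x ^ (-ε))⁻¹ := by
  have hyx : y ^ (-ε) ≤ x ^ (-ε) :=
    Real.rpow_le_rpow_of_nonpos (by linarith) hxy (by linarith)
  exact inv_anti₀ (sub_pos.mpr (rpow_neg_lt_one hε hx)) (by linarith)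

lemma inv_one_sub_rpow_neg_le_rpow {ε x : ℝ} (hε : 0 < ε) (hx : 2 ^ (1 / ε) ≤ x) :
    (1 - x ^ (-ε))⁻¹ ≤ x ^ ε := by
  have hx0 : 0 < x := (by positivity : (0 : ℝ) < 2 ^ (1 / ε)).trans_le hx
  have htwo : 2 ≤ x ^ ε :=
    calc (2 : ℝ) = (2 ^ (1 / ε)) ^ ε := by
          rw [← Real.rpow_mul two_pos.le, one_div_mul_cancel hε.ne', Real.rpow_one]
      _ ≤ x ^ ε := Real.rpow_le_rpow (by positivity) hx hε.le
  have hinv : (x ^ ε)⁻¹ ≤ 2⁻¹ := inv_anti₀ two_pos htwo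
  rw [Real.rpow_neg hx0.le]
  calc (1 - (x ^ ε)⁻¹)⁻¹ ≤ 2⁻¹⁻¹ := inv_anti₀ (by norm_num) (by linarith)
    _ ≤ x ^ ε := by rwa [inv_inv]

lemma prod_primeFactors_inv_one_sub_rpow_neg_le {ε : ℝ} (hε : 0 < ε) :
    ∃ C : ℝ, 0 < C ∧ ∀ N : ℕ, N ≠ 0 →
      ∏ p ∈ N.primeFactors, (1 - (p : ℝ) ^ (-ε))⁻¹ ≤ C * (N : ℝ) ^ ε := by
  obtain ⟨P, hP⟩ : ∃ P : ℕ, (2 : ℝ) ^ (1 / ε) ≤ P := exists_nat_ge _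
  set K : ℝ := (1 - (2 : ℝ) ^ (-ε))⁻¹
  have hK : 1 ≤ K := (one_le_inv₀ (sub_pos.mpr (rpow_neg_lt_one hε one_lt_two))).mpr
    (sub_le_self 1 (by positivity))
  refine ⟨K ^ P, by positivity, fun N hN => ?_⟩
  have hfactor : ∀ p ∈ N.primeFactors,
      (1 - (p : ℝ) ^ (-ε))⁻¹ ≤ (if p < P then K else 1) * (p : ℝ) ^ ε := by
    intro p hp
    have hp2 : (2 : ℝ) ≤ p := by exact_mod_cast (Nat.prime_of_mem_primeFactors hp).two_le
    split_ifs with h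
    · exact (inv_one_sub_rpow_neg_anti hε one_lt_two hp2).trans
        (le_mul_of_one_le_right (by positivity) (Real.one_le_rpow (by linarith) hε.le))
    · rw [one_mul]
      exact inv_one_sub_rpow_neg_le_rpow hε (hP.trans (by exact_mod_cast not_lt.mp h))
  have hnonneg : ∀ p ∈ N.primeFactors, 0 ≤ (1 - (p : ℝ) ^ (-ε))⁻¹ := by
    intro p hp
    have hp1 : (1 : ℝ) < p := by exact_mod_cast (Nat.prime_of_mem_primeFactors hp).one_lt
    exact inv_nonneg.mpr (sub_nonneg.mpr (rpow_neg_lt_one hε hp1).le)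
  have hsmall : ∏ p ∈ N.primeFactors, (if p < P then K else 1) ≤ K ^ P := by
    rw [← Finset.prod_filter, Finset.prod_const]
    refine pow_le_pow_right₀ hK ?_
    calc (N.primeFactors.filter (· < P)).card ≤ (Finset.range P).card :=
          Finset.card_le_card fun p hp => Finset.mem_range.mpr (Finset.mem_filter.mp hp).2
      _ = P := Finset.card_range P
  have hprod : (∏ p ∈ N.primeFactors, (p : ℝ)) ≤ N := by
    rw [← Nat.cast_prod]
    exact_mod_cast Nat.le_of_dvd (Nat.pos_of_ne_zero hN) (Nat.prod_primeFactors_dvd N)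
  calc ∏ p ∈ N.primeFactors, (1 - (p : ℝ) ^ (-ε))⁻¹
      ≤ ∏ p ∈ N.primeFactors, (if p < P then K else 1) * (p : ℝ) ^ ε :=
        Finset.prod_le_prod hnonneg hfactor
    _ = (∏ p ∈ N.primeFactors, if p < P then K else 1) * (∏ p ∈ N.primeFactors, (p : ℝ)) ^ ε := by
        rw [Finset.prod_mul_distrib, Real.finsetProd_rpow _ _ fun _ _ => by positivity]
    _ ≤ K ^ P * (N : ℝ) ^ ε := by gcongr

/-- The function `m ↦ m ^ (-ε)` as a homomorphism, the form in which Euler products take it. -/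
noncomputable def rpowNegHom (ε : ℝ) : ℕ →* ℝ where
  toFun m := (m : ℝ) ^ (-ε)
  map_one' := by simp
  map_mul' a b := by
    rw [Nat.cast_mul, Real.mul_rpow (Nat.cast_nonneg a) (Nat.cast_nonneg b)]

lemma sum_rpow_neg_le_prod_primeFactors {ε : ℝ} (hε : 0 < ε) {N : ℕ} {s : Finset ℕ}
    (hs : ∀ m ∈ s, m ≠ 0 ∧ m.primeFactors ⊆ N.primeFactors) :
    ∑ m ∈ s, (m : ℝ) ^ (-ε) ≤ ∏ p ∈ N.primeFactors, (1 - (p : ℝ) ^ (-ε))⁻¹ := by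
  classical
  have hnorm : ∀ {p : ℕ}, p.Prime → ‖rpowNegHom ε p‖ < 1 := fun {p} hp => by
    change ‖(p : ℝ) ^ (-ε)‖ < 1
    rw [Real.norm_of_nonneg (Real.rpow_nonneg (Nat.cast_nonneg p) _)]
    exact rpow_neg_lt_one hε (by exact_mod_cast hp.one_lt)
  have hEuler := (EulerProduct.summable_and_hasSum_factoredNumbers_prod_filter_prime_geometric
    hnorm N.primeFactors).2
  rw [Finset.filter_true_of_mem fun p => Nat.prime_of_mem_primeFactors] at hEuler
  have hmem : ∀ m ∈ s, m ∈ Nat.factoredNumbers N.primeFactors := fun m hm =>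
    Nat.mem_factoredNumbers_iff_primeFactors_subset.mpr (hs m hm)
  rw [← Finset.sum_subtype_of_mem _ hmem]
  exact sum_le_hasSum _ (fun m _ => Real.rpow_nonneg (Nat.cast_nonneg _) _) hEuler

lemma card_primeFactors_subset_le_rpow {ε : ℝ} (hε : 0 < ε) :
    ∃ C : ℝ, 0 < C ∧ ∀ N : ℕ, N ≠ 0 → ∀ X : ℕ,
      (((Finset.Ioc 0 X).filter fun m => m.primeFactors ⊆ N.primeFactors).card : ℝ)
        ≤ C * (N : ℝ) ^ ε * (X : ℝ) ^ ε := by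
  obtain ⟨C, hC, hprod⟩ := prod_primeFactors_inv_one_sub_rpow_neg_le hε
  refine ⟨C, hC, fun N hN X => ?_⟩
  rcases Nat.eq_zero_or_pos X with rfl | hX
  · simp [Real.zero_rpow hε.ne']
  set T := (Finset.Ioc 0 X).filter fun m => m.primeFactors ⊆ N.primeFactors with hT
  have hmem : ∀ m ∈ T, (0 < m ∧ m ≤ X) ∧ m.primeFactors ⊆ N.primeFactors := fun m hm => by
    rwa [hT, Finset.mem_filter, Finset.mem_Ioc] at hm
  have hX0 : (0 : ℝ) < X := by exact_mod_cast hX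
  -- Rankin's trick: each term of the sum is at least `X ^ (-ε)`
  have hrankin : (T.card : ℝ) * (X : ℝ) ^ (-ε) ≤ C * (N : ℝ) ^ ε :=
    calc (T.card : ℝ) * (X : ℝ) ^ (-ε) = ∑ _m ∈ T, (X : ℝ) ^ (-ε) := by
          rw [Finset.sum_const, nsmul_eq_mul]
      _ ≤ ∑ m ∈ T, (m : ℝ) ^ (-ε) := Finset.sum_le_sum fun m hm =>
          Real.rpow_le_rpow_of_nonpos (by exact_mod_cast (hmem m hm).1.1)
            (by exact_mod_cast (hmem m hm).1.2) (by linarith)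
      _ ≤ ∏ p ∈ N.primeFactors, (1 - (p : ℝ) ^ (-ε))⁻¹ :=
          sum_rpow_neg_le_prod_primeFactors hε fun m hm => ⟨(hmem m hm).1.1.ne', (hmem m hm).2⟩
      _ ≤ C * (N : ℝ) ^ ε := hprod N hN
  rwa [Real.rpow_neg hX0.le, ← div_eq_mul_inv, div_le_iff₀ (by positivity)] at hrankin

lemma card_divisors_le_rpow {ε : ℝ} (hε : 0 < ε) :
    ∃ C : ℝ, 0 < C ∧ ∀ N : ℕ, N ≠ 0 → (N.divisors.card : ℝ) ≤ C * (N : ℝ) ^ ε := by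
  obtain ⟨C, hC, hcard⟩ := card_primeFactors_subset_le_rpow (half_pos hε)
  refine ⟨C, hC, fun N hN => ?_⟩
  have hN0 : (0 : ℝ) < N := by exact_mod_cast Nat.pos_of_ne_zero hN
  calc (N.divisors.card : ℝ)
      ≤ ((Finset.Ioc 0 N).filter fun m => m.primeFactors ⊆ N.primeFactors).card := by
        gcongr
        intro d hd
        rw [Finset.mem_filter, Finset.mem_Ioc]
        exact ⟨⟨Nat.pos_of_mem_divisors hd, Nat.divisor_le hd⟩,
          Nat.primeFactors_mono (Nat.dvd_of_mem_divisors hd) hN⟩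
    _ ≤ C * (N : ℝ) ^ (ε / 2) * (N : ℝ) ^ (ε / 2) := hcard N hN N
    _ = C * (N : ℝ) ^ ε := by rw [mul_assoc, ← Real.rpow_add hN0, add_halves]

/-! ### Counting square roots of `-n ^ 2` -/

/-- `H` is a form root of `n` modulo `A` if `A x² + 2 H x y + B y²` is a primitive integral form of
determinant `A B - H² = n²` for some `B`. Such forms parametrize the Descartes quadruples of
curvature `n`. -/
def IsFormRoot (n A H : ℕ) : Prop :=
  A ∣ H ^ 2 + n ^ 2 ∧ (A.gcd (2 * H)).Coprime ((H ^ 2 + n ^ 2) / A)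

instance (n A H : ℕ) : Decidable (IsFormRoot n A H) :=
  inferInstanceAs (Decidable (_ ∧ _))

/-- The number of form roots of `n` modulo `A`, counted as residues. -/
def formRootCount (n A : ℕ) : ℕ :=
  ((Finset.range A).filter fun H => IsFormRoot n A H).card

lemma isFormRoot_iff_forall_prime {n A H : ℕ} :
    IsFormRoot n A H ↔ A ∣ H ^ 2 + n ^ 2 ∧
      ∀ p : ℕ, p.Prime → p ∣ A → p ∣ 2 * H → ¬ p * A ∣ H ^ 2 + n ^ 2 := by
  refine and_congr_right fun hA => ?_
  rw [← not_iff_not, Nat.Prime.not_coprime_iff_dvd]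
  push Not
  refine exists_congr fun p => and_congr_right fun _ => ?_
  rw [Nat.dvd_gcd_iff, Nat.dvd_div_iff_mul_dvd hA, mul_comm A p, and_assoc]

lemma isFormRoot_add_mul_iff (n A H t : ℕ) : IsFormRoot n A (H + t * A) ↔ IsFormRoot n A H := by
  have hexpand : (H + t * A) ^ 2 + n ^ 2 = H ^ 2 + n ^ 2 + (2 * H + t * A) * (t * A) := by ring
  have hdvd : A ∣ (H + t * A) ^ 2 + n ^ 2 ↔ A ∣ H ^ 2 + n ^ 2 := by
    rw [hexpand]
    exact Nat.dvd_add_left (((dvd_mul_left A t).mul_left _))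
  have hdvd_two : ∀ p, p ∣ A → (p ∣ 2 * (H + t * A) ↔ p ∣ 2 * H) := by
    intro p hp
    rw [mul_add]
    exact Nat.dvd_add_left ((hp.mul_left _).mul_left _)
  have hdvd_mul : ∀ p, p ∣ A → p ∣ 2 * H →
      (p * A ∣ (H + t * A) ^ 2 + n ^ 2 ↔ p * A ∣ H ^ 2 + n ^ 2) := by
    intro p hp hH
    rw [hexpand]
    exact Nat.dvd_add_left (mul_dvd_mul (Nat.dvd_add hH (hp.mul_left t)) (dvd_mul_left A t))
  rw [isFormRoot_iff_forall_prime, isFormRoot_iff_forall_prime, hdvd]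
  refine and_congr_right fun _ => forall_congr' fun p => imp_congr_right fun _ =>
    forall_congr' fun hp => ?_
  rw [hdvd_two p hp]
  exact forall_congr' fun hH => not_congr (hdvd_mul p hp hH)

lemma isFormRoot_mod_iff (n A H : ℕ) : IsFormRoot n A (H % A) ↔ IsFormRoot n A H := by
  conv_rhs => rw [← Nat.mod_add_div H A, mul_comm A]
  exact (isFormRoot_add_mul_iff n A (H % A) (H / A)).symm

lemma isFormRoot_mul_iff {n a b H : ℕ} (hab : a.Coprime b) :
    IsFormRoot n (a * b) H ↔ IsFormRoot n a H ∧ IsFormRoot n b H := by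
  have cancel : ∀ {a b : ℕ}, a.Coprime b → ∀ p : ℕ, p ∣ a → b ∣ H ^ 2 + n ^ 2 →
      (p * (a * b) ∣ H ^ 2 + n ^ 2 ↔ p * a ∣ H ^ 2 + n ^ 2) := by
    intro a b hab p hp hb
    rw [← mul_assoc]
    exact ⟨dvd_of_mul_right_dvd, fun h =>
      ((hab.coprime_dvd_left hp).mul_left hab).mul_dvd_of_dvd_of_dvd h hb⟩
  simp only [isFormRoot_iff_forall_prime]
  constructor
  · rintro ⟨hdvd, hprim⟩
    have ha := dvd_of_mul_right_dvd hdvd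
    have hb := dvd_of_mul_left_dvd hdvd
    refine ⟨⟨ha, fun p hp hpa hpH h => hprim p hp (hpa.mul_right b) hpH ?_⟩,
      ⟨hb, fun p hp hpb hpH h => hprim p hp (hpb.mul_left a) hpH ?_⟩⟩
    · exact (cancel hab p hpa hb).mpr h
    · exact mul_comm a b ▸ (cancel hab.symm p hpb ha).mpr h
  · rintro ⟨⟨ha, hprim_a⟩, ⟨hb, hprim_b⟩⟩
    refine ⟨hab.mul_dvd_of_dvd_of_dvd ha hb, fun p hp hpab hpH h => ?_⟩
    rcases hp.dvd_mul.mp hpab with hpa | hpb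
    · exact hprim_a p hp hpa hpH ((cancel hab p hpa hb).mp h)
    · exact hprim_b p hp hpb hpH ((cancel hab.symm p hpb ha).mp (mul_comm a b ▸ h))

lemma formRootCount_one (n : ℕ) : formRootCount n 1 = 1 := by
  simp [formRootCount, IsFormRoot]

lemma card_filter_range_mul {a b : ℕ} (ha : a ≠ 0) (hb : b ≠ 0) (hab : a.Coprime b)
    (p q : ℕ → Prop) [DecidablePred p] [DecidablePred q] :
    ((Finset.range (a * b)).filter fun x => p (x % a) ∧ q (x % b)).card =
      ((Finset.range a).filter p).card * ((Finset.range b).filter q).card := by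
  rw [← Finset.card_product]
  refine Finset.card_nbij' (fun x => (x % a, x % b))
    (fun y => (Nat.chineseRemainder hab y.1 y.2 : ℕ)) ?_ ?_ ?_ ?_
  · intro x hx
    simp only [Finset.coe_filter, Finset.mem_range, Set.mem_ofPred_eq, Finset.coe_product,
      Set.mem_prod] at hx ⊢
    exact ⟨⟨Nat.mod_lt x (Nat.pos_of_ne_zero ha), hx.2.1⟩,
      ⟨Nat.mod_lt x (Nat.pos_of_ne_zero hb), hx.2.2⟩⟩
  · rintro ⟨x, y⟩ hxy
    simp only [Finset.coe_filter, Finset.mem_range, Set.mem_ofPred_eq, Finset.coe_product,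
      Set.mem_prod] at hxy ⊢
    obtain ⟨hmod_a, hmod_b⟩ := (Nat.chineseRemainder hab x y).2
    rw [Nat.mod_eq_of_modEq hmod_a hxy.1.1, Nat.mod_eq_of_modEq hmod_b hxy.2.1]
    exact ⟨Nat.chineseRemainder_lt_mul hab x y ha hb, hxy.1.2, hxy.2.2⟩
  · intro x hx
    simp only [Finset.coe_filter, Finset.mem_range, Set.mem_ofPred_eq] at hx
    obtain ⟨hmod_a, hmod_b⟩ := (Nat.chineseRemainder hab (x % a) (x % b)).2
    exact Nat.ModEq.eq_of_lt_of_lt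
      ((Nat.modEq_and_modEq_iff_modEq_mul hab).mp
        ⟨hmod_a.trans (Nat.mod_modEq x a), hmod_b.trans (Nat.mod_modEq x b)⟩)
      (Nat.chineseRemainder_lt_mul hab _ _ ha hb) hx.1
  · rintro ⟨x, y⟩ hxy
    simp only [Finset.coe_filter, Finset.mem_range, Set.mem_ofPred_eq, Finset.coe_product,
      Set.mem_prod] at hxy
    obtain ⟨hmod_a, hmod_b⟩ := (Nat.chineseRemainder hab x y).2
    exact Prod.ext (Nat.mod_eq_of_modEq hmod_a hxy.1.1) (Nat.mod_eq_of_modEq hmod_b hxy.2.1)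

lemma formRootCount_mul {n a b : ℕ} (ha : a ≠ 0) (hb : b ≠ 0) (hab : a.Coprime b) :
    formRootCount n (a * b) = formRootCount n a * formRootCount n b := by
  rw [formRootCount, formRootCount, formRootCount, ← card_filter_range_mul ha hb hab]
  simp only [isFormRoot_mul_iff hab, isFormRoot_mod_iff]

/-! ### Upper bounds for the number of roots -/

lemma card_le_of_modEq_of_lt_mul {g L : ℕ} {s : Finset ℕ} (hlt : ∀ x ∈ s, x < g * L)
    (hmod : ∀ x ∈ s, ∀ y ∈ s, x ≡ y [MOD L]) : s.card ≤ g := by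
  rw [← Finset.card_range g]
  refine Finset.card_le_card_of_injOn (fun x => x / L) (fun x hx => ?_) fun x hx y hy hxy => ?_
  · exact Finset.mem_coe.mpr (Finset.mem_range.mpr (Nat.div_lt_of_lt_mul (mul_comm g L ▸ hlt x hx)))
  · rw [← Nat.div_add_mod x L, ← Nat.div_add_mod y L, show x / L = y / L from hxy, hmod x hx y hy]

lemma card_le_gcd_of_dvd_sub_of_dvd_add {d e : ℕ} {y : ℤ} {S : Finset ℕ}
    (hlt : ∀ x ∈ S, x < d * e) (hsub : ∀ x ∈ S, (d : ℤ) ∣ x - y) (hadd : ∀ x ∈ S, (e : ℤ) ∣ x + y) :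
    S.card ≤ d.gcd e := by
  refine card_le_of_modEq_of_lt_mul (L := d.lcm e) (fun x hx => ?_) fun x hx x' hx' => ?_
  · rw [Nat.gcd_mul_lcm]
    exact hlt x hx
  · refine Nat.mod_lcm (Nat.modEq_iff_dvd.mpr ?_) (Nat.modEq_iff_dvd.mpr ?_)
    · rw [← sub_sub_sub_cancel_right (x' : ℤ) x y]
      exact dvd_sub (hsub x' hx') (hsub x hx)
    · rw [← add_sub_add_right_eq_sub (x' : ℤ) x y]
      exact dvd_sub (hadd x' hx') (hadd x hx)

/-- Fix a root `y` and sort the roots `x` by `d = gcd A (x - y)`, so that `A / d ∣ x + y`. -/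
lemma card_le_card_divisors_mul_of_dvd_sq_sub_sq {A B : ℕ} (hA : A ≠ 0) {R : Finset ℕ}
    (hlt : ∀ x ∈ R, x < A) (hsq : ∀ x ∈ R, ∀ y ∈ R, (A : ℤ) ∣ (x : ℤ) ^ 2 - (y : ℤ) ^ 2)
    (hB : ∀ d e, d * e = A → ∀ y ∈ R, d.gcd e ∣ 2 * y → d.gcd e ≤ B) :
    R.card ≤ A.divisors.card * B := by
  rcases R.eq_empty_or_nonempty with rfl | ⟨y, hy⟩
  · simp
  have hmaps : ∀ x ∈ R, Int.gcd A ((x : ℤ) - y) ∈ A.divisors := fun x _ =>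
    Nat.mem_divisors.mpr ⟨Int.natCast_dvd_natCast.mp (Int.gcd_dvd_left ..), hA⟩
  rw [mul_comm]
  refine Finset.card_le_mul_card_image_of_maps_to hmaps B fun d hd => ?_
  obtain ⟨e, rfl⟩ := Nat.dvd_of_mem_divisors hd
  have hd0 : (d : ℤ) ≠ 0 := by exact_mod_cast left_ne_zero_of_mul hA
  set S := R.filter fun x : ℕ => Int.gcd ((d * e : ℕ) : ℤ) ((x : ℤ) - y) = d
  have hsub : ∀ x ∈ S, (d : ℤ) ∣ x - y := fun x hx =>
    (Finset.mem_filter.mp hx).2 ▸ Int.gcd_dvd_right ..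
  have hadd : ∀ x ∈ S, (e : ℤ) ∣ x + y := by
    intro x hx
    obtain ⟨hxR, hgcd⟩ := Finset.mem_filter.mp hx
    have hmul := dvd_gcd_mul_of_dvd_mul
      ((hsq x hxR y hy).trans (dvd_of_eq ((sq_sub_sq (x : ℤ) y).trans (mul_comm _ _))))
    rw [← Int.coe_gcd, hgcd, Nat.cast_mul] at hmul
    exact Int.dvd_of_mul_dvd_mul_left hd0 hmul
  rcases S.eq_empty_or_nonempty with hempty | ⟨x₀, hx₀⟩
  · exact (Finset.card_eq_zero.mpr hempty).trans_le (Nat.zero_le B)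
  have hgcd_dvd : d.gcd e ∣ 2 * y := by
    have hdvd_sub := dvd_sub
      ((Int.natCast_dvd_natCast.mpr (Nat.gcd_dvd_right d e)).trans (hadd x₀ hx₀))
      ((Int.natCast_dvd_natCast.mpr (Nat.gcd_dvd_left d e)).trans (hsub x₀ hx₀))
    rw [show (x₀ + y : ℤ) - (x₀ - y) = ((2 * y : ℕ) : ℤ) by push_cast; ring] at hdvd_sub
    exact_mod_cast hdvd_sub
  exact (card_le_gcd_of_dvd_sub_of_dvd_add (fun x hx => hlt x (Finset.mem_filter.mp hx).1)
    hsub hadd).trans (hB d e rfl y hy hgcd_dvd)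

lemma formRootCount_le_card_divisors_mul {n A B : ℕ} (hA : A ≠ 0)
    (hB : ∀ d e, d * e = A → ∀ y, A ∣ y ^ 2 + n ^ 2 → d.gcd e ∣ 2 * y → d.gcd e ≤ B) :
    formRootCount n A ≤ A.divisors.card * B := by
  have hroot : ∀ x ∈ (Finset.range A).filter (IsFormRoot n A), x < A ∧ A ∣ x ^ 2 + n ^ 2 :=
    fun x hx => ⟨Finset.mem_range.mp (Finset.mem_filter.mp hx).1, (Finset.mem_filter.mp hx).2.1⟩
  refine card_le_card_divisors_mul_of_dvd_sq_sub_sq hA (fun x hx => (hroot x hx).1)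
    (fun x hx y hy => ?_) fun d e hde y hy => hB d e hde y (hroot y hy).2
  rw [show (x ^ 2 - y ^ 2 : ℤ) = ((x ^ 2 + n ^ 2 : ℕ) : ℤ) - ((y ^ 2 + n ^ 2 : ℕ) : ℤ) by
    push_cast; ring]
  exact dvd_sub (Int.natCast_dvd_natCast.mpr (hroot x hx).2)
    (Int.natCast_dvd_natCast.mpr (hroot y hy).2)

lemma formRootCount_le_card_divisors_mul_sqrt {n A : ℕ} (hA : A ≠ 0) :
    formRootCount n A ≤ A.divisors.card * A.sqrt := by
  refine formRootCount_le_card_divisors_mul hA fun d e hde y _ _ => Nat.le_sqrt.mpr ?_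
  exact Nat.le_of_dvd (Nat.pos_of_ne_zero hA)
    (hde ▸ mul_dvd_mul (Nat.gcd_dvd_left d e) (Nat.gcd_dvd_right d e))

lemma formRootCount_one_le {A : ℕ} (hA : A ≠ 0) : formRootCount 1 A ≤ A.divisors.card * 2 := by
  refine formRootCount_le_card_divisors_mul hA fun d e hde y hy hg => ?_
  have hdvd : d.gcd e ∣ 2 * y ^ 2 + 2 :=
    ((Nat.gcd_dvd_left d e).trans ((Dvd.intro e hde).trans hy)).mul_left 2
  exact Nat.le_of_dvd two_pos ((Nat.dvd_add_right (hg.trans ⟨y, by ring⟩)).mp hdvd)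

/-! ### Roots modulo prime powers -/

section PrimePower

variable {n p k : ℕ}

lemma isFormRoot_prime_pow_iff {H : ℕ} (hp : p.Prime) (hpn : p.Coprime (2 * n)) (hk : k ≠ 0) :
    IsFormRoot n (p ^ k) H ↔ p ^ k ∣ H ^ 2 + n ^ 2 := by
  refine ⟨fun h => h.1, fun h => isFormRoot_iff_forall_prime.mpr ⟨h, fun q hq hqp hqH _ => ?_⟩⟩
  obtain rfl : q = p := (Nat.prime_dvd_prime_iff_eq hq hp).mp (hq.dvd_of_dvd_pow hqp)
  have hqH' : q ∣ H := hpn.coprime_mul_right_right.dvd_of_dvd_mul_left hqH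
  have hqn : q ∣ n ^ 2 :=
    (Nat.dvd_add_right (dvd_pow hqH' two_ne_zero)).mp ((dvd_pow_self q hk).trans h)
  exact hp.coprime_iff_not_dvd.mp hpn.coprime_mul_left_right (hp.dvd_of_dvd_pow hqn)

lemma exists_prime_pow_dvd_sq_add_sq (hp : p.Prime) (hp4 : p % 4 = 1) (n k : ℕ) :
    ∃ y, p ^ k ∣ y ^ 2 + n ^ 2 := by
  have := Fact.mk hp
  rcases Nat.eq_zero_or_pos k with rfl | hk
  · exact ⟨0, by simp⟩
  obtain ⟨x, hx⟩ := ZMod.exists_sq_eq_neg_one_iff.mpr (show p % 4 ≠ 3 by omega)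
  obtain ⟨m, rfl⟩ := ZMod.natCast_zmod_surjective x
  have hbase : (p : ℤ) ∣ (m : ℤ) ^ 2 - (-1) := by
    rw [← ZMod.intCast_zmod_eq_zero_iff_dvd]
    push_cast
    rw [pow_two, ← hx, sub_self]
  -- raising `m² ≡ -1` to the power `p ^ (k - 1)` lifts it to a congruence modulo `p ^ k`
  have hlift := dvd_sub_pow_of_dvd_sub hbase (k - 1)
  have hodd : Odd (p ^ (k - 1)) := Odd.pow (Nat.odd_iff.mpr (by omega))
  rw [Nat.sub_add_cancel hk, hodd.neg_one_pow, sub_neg_eq_add] at hlift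
  refine ⟨n * m ^ p ^ (k - 1), ?_⟩
  have hdvd : ((p ^ k : ℕ) : ℤ) ∣ (((n * m ^ p ^ (k - 1)) ^ 2 + n ^ 2 : ℕ) : ℤ) := by
    push_cast
    refine (hlift.mul_left ((n : ℤ) ^ 2)).trans (dvd_of_eq ?_)
    rw [← pow_mul, mul_comm 2 (p ^ (k - 1)), pow_mul]
    ring
  exact_mod_cast hdvd

lemma prime_pow_dvd_sub_or_add (hp : p.Prime) {x y : ℤ} (hpy : ¬ (p : ℤ) ∣ 2 * y)
    (h : (p : ℤ) ^ k ∣ x ^ 2 - y ^ 2) : (p : ℤ) ^ k ∣ x - y ∨ (p : ℤ) ^ k ∣ x + y := by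
  have hp' := Nat.prime_iff_prime_int.mp hp
  rw [sq_sub_sq] at h
  by_cases hsub : (p : ℤ) ∣ x - y
  · refine Or.inl (hp'.pow_dvd_of_dvd_mul_left k (fun hadd => hpy ?_) h)
    rw [show 2 * y = (x + y) - (x - y) by ring]
    exact dvd_sub hadd hsub
  · exact Or.inr (hp'.pow_dvd_of_dvd_mul_right k hsub h)

lemma filter_prime_pow_dvd_sq_add_sq (hp : p.Prime) {y : ℕ} (hpy : ¬ p ∣ 2 * y) (hy : y < p ^ k)
    (hroot : p ^ k ∣ y ^ 2 + n ^ 2) :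
    (Finset.range (p ^ k)).filter (fun x => p ^ k ∣ x ^ 2 + n ^ 2) = {y, p ^ k - y} := by
  have hy0 : 0 < y := Nat.pos_of_ne_zero (by rintro rfl; exact hpy (dvd_zero p))
  have hroot' : (p : ℤ) ^ k ∣ y ^ 2 + n ^ 2 := by exact_mod_cast hroot
  ext x
  simp only [Finset.mem_filter, Finset.mem_range, Finset.mem_insert, Finset.mem_singleton]
  constructor
  · rintro ⟨hx, hxroot⟩
    have hsq : (p : ℤ) ^ k ∣ x ^ 2 - y ^ 2 := by
      rw [show (x ^ 2 - y ^ 2 : ℤ) = (x ^ 2 + n ^ 2) - (y ^ 2 + n ^ 2) by ring]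
      exact dvd_sub (by exact_mod_cast hxroot) hroot'
    rcases prime_pow_dvd_sub_or_add hp (by exact_mod_cast hpy) hsq with hsub | hadd
    · have hmod : y ≡ x [MOD p ^ k] := Nat.modEq_iff_dvd.mpr (by exact_mod_cast hsub)
      exact Or.inl (hmod.eq_of_lt_of_lt hy hx).symm
    · obtain ⟨c, hc⟩ : p ^ k ∣ x + y := by exact_mod_cast hadd
      have hc1 : c = 1 := by
        have hpos : 0 < c := Nat.pos_of_ne_zero (by rintro rfl; omega)
        have hlt : c < 2 := Nat.lt_of_mul_lt_mul_left (a := p ^ k) (by omega)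
        omega
      subst hc1
      exact Or.inr (by omega)
  · rintro (rfl | rfl)
    · exact ⟨hy, hroot⟩
    · refine ⟨by omega, ?_⟩
      have hneg : (p : ℤ) ^ k ∣ ((p : ℤ) ^ k - y) ^ 2 + n ^ 2 := by
        rw [show ((p : ℤ) ^ k - y) ^ 2 + n ^ 2 = p ^ k * (p ^ k - 2 * y) + (y ^ 2 + n ^ 2) by ring]
        exact dvd_add (dvd_mul_right _ _) hroot'
      have hcast : ((p ^ k - y : ℕ) : ℤ) = (p : ℤ) ^ k - y := by push_cast [hy.le]; rfl
      rw [← hcast] at hneg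
      exact_mod_cast hneg

lemma not_prime_dvd_sq_add_sq (hp : p.Prime) (hp4 : p % 4 = 3) (hpn : ¬ p ∣ n) (x : ℕ) :
    ¬ p ∣ x ^ 2 + n ^ 2 := by
  have := Fact.mk hp
  intro h
  rw [← ZMod.natCast_eq_zero_iff, Nat.cast_add, Nat.cast_pow, Nat.cast_pow] at h
  refine ZMod.mod_four_ne_three_of_sq_eq_neg_sq' (y := (n : ZMod p)) ?_
    (eq_neg_of_add_eq_zero_left h) hp4
  rwa [Ne, ZMod.natCast_eq_zero_iff]

lemma formRootCount_prime_pow (hp : p.Prime) (hpn : p.Coprime (2 * n)) (hk : k ≠ 0) :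
    (formRootCount n (p ^ k) : ℤ) = 1 + ZMod.χ₄ p := by
  have hpn' : ¬ p ∣ n := hp.coprime_iff_not_dvd.mp hpn.coprime_mul_left_right
  have hp_two : p.Coprime 2 := hpn.coprime_mul_right_right
  have hodd : p % 2 = 1 := Nat.odd_iff.mp (Nat.coprime_two_right.mp hp_two)
  have hpk : p ∣ p ^ k := dvd_pow_self p hk
  simp only [formRootCount, isFormRoot_prime_pow_iff hp hpn hk]
  obtain hp4 | hp4 : p % 4 = 1 ∨ p % 4 = 3 := by omega
  · obtain ⟨y, hy, hroot⟩ : ∃ y < p ^ k, p ^ k ∣ y ^ 2 + n ^ 2 := by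
      obtain ⟨z, hz⟩ := exists_prime_pow_dvd_sq_add_sq hp hp4 n k
      rw [← isFormRoot_prime_pow_iff hp hpn hk, ← isFormRoot_mod_iff] at hz
      exact ⟨z % p ^ k, Nat.mod_lt z (pow_pos hp.pos k), hz.1⟩
    have hpy : ¬ p ∣ 2 * y := fun h => hpn' <| hp.dvd_of_dvd_pow <|
      (Nat.dvd_add_right (dvd_pow (hp_two.dvd_of_dvd_mul_left h) two_ne_zero)).mp (hpk.trans hroot)
    have hne : y ≠ p ^ k - y := fun h => hpy ((show p ^ k = 2 * y by omega) ▸ hpk)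
    rw [filter_prime_pow_dvd_sq_add_sq hp hpy hy hroot, Finset.card_pair hne,
      ZMod.χ₄_nat_one_mod_four hp4]
    norm_num
  · rw [Finset.filter_eq_empty_iff.mpr fun x _ hx =>
      not_prime_dvd_sq_add_sq hp hp4 hpn' x (hpk.trans hx), ZMod.χ₄_nat_three_mod_four hp4]
    norm_num

end PrimePower

/-! ### The Dirichlet series of the root count -/

section SmoothPart

variable {R : Type*}

/-- The restriction of `f` to the integers all of whose prime factors divide `N`. -/
def smoothPart [Zero R] (N : ℕ) (f : ArithmeticFunction R) : ArithmeticFunction R :=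
  ⟨fun m => if m.primeFactors ⊆ N.primeFactors then f m else 0, by simp⟩

/-- The restriction of `f` to the integers coprime to `N`. -/
def coprimePart [Zero R] (N : ℕ) (f : ArithmeticFunction R) : ArithmeticFunction R :=
  ⟨fun m => if m.Coprime N then f m else 0, by simp⟩

lemma smoothPart_apply [Zero R] (N : ℕ) (f : ArithmeticFunction R) (m : ℕ) :
    smoothPart N f m = if m.primeFactors ⊆ N.primeFactors then f m else 0 := rfl

lemma coprimePart_apply [Zero R] (N : ℕ) (f : ArithmeticFunction R) (m : ℕ) :
    coprimePart N f m = if m.Coprime N then f m else 0 := rfl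

lemma isMultiplicative_smoothPart [MonoidWithZero R] {f : ArithmeticFunction R}
    (hf : f.IsMultiplicative) (N : ℕ) : (smoothPart N f).IsMultiplicative := by
  rw [ArithmeticFunction.IsMultiplicative.iff_ne_zero]
  refine ⟨by simp [smoothPart_apply, hf.1], fun {a b} ha hb hab => ?_⟩
  simp only [smoothPart_apply, Nat.primeFactors_mul ha hb, Finset.union_subset_iff,
    hf.map_mul_of_coprime hab, ite_zero_mul_ite_zero]

lemma isMultiplicative_coprimePart [MonoidWithZero R] {f : ArithmeticFunction R}
    (hf : f.IsMultiplicative) (N : ℕ) : (coprimePart N f).IsMultiplicative := by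
  rw [ArithmeticFunction.IsMultiplicative.iff_ne_zero]
  refine ⟨by simp [coprimePart_apply, hf.1], fun {a b} _ _ hab => ?_⟩
  simp only [coprimePart_apply, Nat.coprime_mul_iff_left, hf.map_mul_of_coprime hab,
    ite_zero_mul_ite_zero]

lemma mul_apply_prime_pow [Semiring R] (f g : ArithmeticFunction R) {p : ℕ} (hp : p.Prime)
    (k : ℕ) : (f * g) (p ^ k) = ∑ i ∈ Finset.range (k + 1), f (p ^ i) * g (p ^ (k - i)) := by
  rw [ArithmeticFunction.mul_apply, Nat.sum_divisorsAntidiagonal (fun a b => f a * g b),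
    Nat.sum_divisors_prime_pow hp]
  refine Finset.sum_congr rfl fun i hi => ?_
  rw [Nat.pow_div (Nat.lt_succ_iff.mp (Finset.mem_range.mp hi)) hp.pos]

lemma smoothPart_mul_coprimePart [CommSemiring R] {f : ArithmeticFunction R}
    (hf : f.IsMultiplicative) {N : ℕ} (hN : N ≠ 0) : smoothPart N f * coprimePart N f = f := by
  rw [((isMultiplicative_smoothPart hf N).mul
    (isMultiplicative_coprimePart hf N)).eq_iff_eq_on_prime_powers _ f hf]
  intro p k hp
  rcases eq_or_ne k 0 with rfl | hk
  · simp [smoothPart_apply, coprimePart_apply, hf.1]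
  rw [mul_apply_prime_pow _ _ hp]
  by_cases hpN : p ∣ N
  · have hcoprime : ∀ j ≠ 0, ¬ (p ^ j).Coprime N := fun j hj => by
      rwa [Nat.coprime_pow_left_iff (Nat.pos_of_ne_zero hj), hp.coprime_iff_not_dvd, not_not]
    rw [Finset.sum_eq_single_of_mem k (Finset.self_mem_range_succ k)]
    · simp [smoothPart_apply, coprimePart_apply, hf.1, Nat.primeFactors_prime_pow hk hp,
        hp, hpN, hN]
    · intro i hi hik
      rw [coprimePart_apply, if_neg (hcoprime _ (by rw [Finset.mem_range] at hi; omega)), mul_zero]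
  · have hsmooth : ∀ i ≠ 0, ¬ (p ^ i).primeFactors ⊆ N.primeFactors := fun i hi => by
      rw [Nat.primeFactors_prime_pow hi hp, Finset.singleton_subset_iff]
      exact fun h => hpN (Nat.dvd_of_mem_primeFactors h)
    rw [Finset.sum_eq_single_of_mem 0 (by simp)]
    · simp [smoothPart_apply, coprimePart_apply, hf.1,
        (hp.coprime_iff_not_dvd.mpr hpN).pow_left k]
    · intro i _ hi
      rw [smoothPart_apply, if_neg (hsmooth i hi), zero_mul]

lemma coprimePart_mul [Semiring R] (N : ℕ) (f g : ArithmeticFunction R) :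
    coprimePart N (f * g) = coprimePart N f * coprimePart N g := by
  ext m
  have hcoprime : ∀ x ∈ m.divisorsAntidiagonal,
      (x.1.Coprime N ∧ x.2.Coprime N ↔ m.Coprime N) := fun x hx => by
    rw [← Nat.coprime_mul_iff_left, (Nat.mem_divisorsAntidiagonal.mp hx).1]
  simp only [coprimePart_apply, ArithmeticFunction.mul_apply, ite_zero_mul_ite_zero]
  rw [Finset.sum_congr rfl fun x hx => if_congr (hcoprime x hx) rfl rfl]
  split_ifs <;> simp

lemma coprimePart_congr [CommSemiring R] {f g : ArithmeticFunction R} (hf : f.IsMultiplicative)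
    (hg : g.IsMultiplicative) {N : ℕ}
    (hfg : ∀ p k : ℕ, p.Prime → p.Coprime N → k ≠ 0 → f (p ^ k) = g (p ^ k)) :
    coprimePart N f = coprimePart N g := by
  rw [(isMultiplicative_coprimePart hf N).eq_iff_eq_on_prime_powers _ _
    (isMultiplicative_coprimePart hg N)]
  intro p k hp
  rcases eq_or_ne k 0 with rfl | hk
  · simp [coprimePart_apply, hf.1, hg.1]
  simp only [coprimePart_apply, Nat.coprime_pow_left_iff (Nat.pos_of_ne_zero hk)]
  exact if_ctx_congr Iff.rfl (fun hpN => hfg p k hp hpN hk) fun _ => rfl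

end SmoothPart

/-- The arithmetic function `A ↦ formRootCount n A`. -/
def formRootFun (n : ℕ) : ArithmeticFunction ℝ :=
  ⟨fun A => formRootCount n A, by simp [formRootCount]⟩

lemma formRootFun_apply (n A : ℕ) : formRootFun n A = formRootCount n A := rfl

lemma isMultiplicative_formRootFun (n : ℕ) : (formRootFun n).IsMultiplicative := by
  rw [ArithmeticFunction.IsMultiplicative.iff_ne_zero]
  refine ⟨by simp [formRootFun_apply, formRootCount_one], fun {a b} ha hb hab => ?_⟩
  rw [formRootFun_apply, formRootCount_mul ha hb hab, Nat.cast_mul]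
  rfl

/-- The quadratic character modulo `4` as an arithmetic function. -/
def chiFour : ArithmeticFunction ℝ :=
  ⟨fun m => ((ZMod.χ₄ m : ℤ) : ℝ), by simp⟩

lemma chiFour_apply (m : ℕ) : chiFour m = ((ZMod.χ₄ m : ℤ) : ℝ) := rfl

lemma chiFour_mul (a b : ℕ) : chiFour (a * b) = chiFour a * chiFour b := by
  simp only [chiFour_apply, Nat.cast_mul, map_mul, Int.cast_mul]

lemma isMultiplicative_chiFour : chiFour.IsMultiplicative :=
  ⟨by simp [chiFour_apply], fun _ => chiFour_mul _ _⟩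

lemma chiFour_sq_eq_one {m : ℕ} (hm : m.Coprime 2) : chiFour m ^ 2 = 1 := by
  have hodd : m % 2 = 1 := Nat.odd_iff.mp (Nat.coprime_two_right.mp hm)
  obtain hm4 | hm4 : m % 4 = 1 ∨ m % 4 = 3 := by omega
  · simp [chiFour_apply, ZMod.χ₄_nat_one_mod_four hm4]
  · simp [chiFour_apply, ZMod.χ₄_nat_three_mod_four hm4]

/-- The function `k² ↦ μ(k)`, extended by zero to nonsquares. -/
noncomputable def squareMoebius : ArithmeticFunction ℝ :=
  ⟨fun m => if IsSquare m then (ArithmeticFunction.moebius m.sqrt : ℝ) else 0, by simp⟩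

lemma squareMoebius_apply (m : ℕ) :
    squareMoebius m = if IsSquare m then (ArithmeticFunction.moebius m.sqrt : ℝ) else 0 := rfl

lemma isSquare_of_isSquare_mul_of_coprime {a b : ℕ} (hab : a.Coprime b) (h : IsSquare (a * b)) :
    IsSquare a := by
  obtain ⟨c, hc⟩ := h
  obtain ⟨d, hd⟩ := exists_eq_pow_of_mul_eq_pow (Nat.isUnit_iff.mpr hab) (hc.trans (pow_two c).symm)
  exact ⟨d, hd.trans (pow_two d)⟩

lemma isMultiplicative_squareMoebius : squareMoebius.IsMultiplicative := by
  rw [ArithmeticFunction.IsMultiplicative.iff_ne_zero]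
  refine ⟨by simp [squareMoebius_apply], fun {a b} _ _ hab => ?_⟩
  simp only [squareMoebius_apply]
  by_cases ha : IsSquare a
  · by_cases hb : IsSquare b
    · rw [if_pos (ha.mul hb), if_pos ha, if_pos hb]
      obtain ⟨c, rfl⟩ := ha
      obtain ⟨d, rfl⟩ := hb
      rw [mul_mul_mul_comm, Nat.sqrt_eq, Nat.sqrt_eq, Nat.sqrt_eq,
        ArithmeticFunction.isMultiplicative_moebius.map_mul_of_coprime
          hab.coprime_mul_right.coprime_mul_right_right, Int.cast_mul]
    · rw [if_neg hb, mul_zero, if_neg fun h => hb <|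
        isSquare_of_isSquare_mul_of_coprime hab.symm (mul_comm a b ▸ h)]
  · rw [if_neg ha, zero_mul, if_neg fun h => ha (isSquare_of_isSquare_mul_of_coprime hab h)]

lemma isSquare_prime_pow_iff {p : ℕ} (hp : p.Prime) {i : ℕ} : IsSquare (p ^ i) ↔ Even i := by
  refine ⟨fun ⟨c, hc⟩ => ?_, fun hi => hi.isSquare_pow p⟩
  obtain ⟨j, -, rfl⟩ := (Nat.dvd_prime_pow hp).mp (Dvd.intro _ hc.symm)
  exact ⟨j, Nat.pow_right_injective hp.two_le (hc.trans (pow_add p j j).symm)⟩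

lemma squareMoebius_prime_pow {p : ℕ} (hp : p.Prime) (i : ℕ) :
    squareMoebius (p ^ i) = if i = 0 then 1 else if i = 2 then -1 else 0 := by
  simp only [squareMoebius_apply, isSquare_prime_pow_iff hp]
  rcases Nat.even_or_odd' i with ⟨j, rfl | rfl⟩
  · rw [if_pos (even_two_mul j), mul_comm 2 j, pow_mul, Nat.sqrt_eq']
    rcases eq_or_ne j 0 with rfl | hj
    · simp
    · rw [ArithmeticFunction.moebius_apply_prime_pow hp hj]
      split_ifs <;> first | omega | simp
  · rw [if_neg (by simp), if_neg (by omega), if_neg (by omega)]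

lemma squareMoebius_mul_zeta_prime_pow {p : ℕ} (hp : p.Prime) (k : ℕ) :
    (squareMoebius * ↑ArithmeticFunction.zeta) (p ^ k) = if k ≤ 1 then 1 else 0 := by
  have hzeta : ∀ i, (ArithmeticFunction.zeta : ArithmeticFunction ℝ) (p ^ i) = 1 := fun i => by
    simp [hp.ne_zero]
  simp only [mul_apply_prime_pow _ _ hp, hzeta, mul_one, squareMoebius_prime_pow hp]
  match k with
  | 0 => simp
  | 1 => simp [Finset.sum_range_succ]
  | k + 2 => simp [Finset.sum_range_succ']

lemma coprimePart_formRootFun {n N : ℕ} (hnN : 2 * n ∣ N) :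
    coprimePart N (formRootFun n) = coprimePart N squareMoebius *
      (coprimePart N (ArithmeticFunction.zeta : ArithmeticFunction ℝ) * coprimePart N chiFour) := by
  have hmul : (squareMoebius * (ArithmeticFunction.zeta : ArithmeticFunction ℝ)).IsMultiplicative :=
    isMultiplicative_squareMoebius.mul ArithmeticFunction.isMultiplicative_zeta.natCast
  rw [← mul_assoc, ← coprimePart_mul, ← coprimePart_mul]
  refine coprimePart_congr (isMultiplicative_formRootFun n) (hmul.mul isMultiplicative_chiFour)
    fun p k hp hpN hk => ?_
  have hpn : p.Coprime (2 * n) := hpN.coprime_dvd_right hnN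
  have hcount : formRootFun n (p ^ k) = 1 + chiFour p := by
    rw [formRootFun_apply, chiFour_apply]
    exact_mod_cast formRootCount_prime_pow hp hpn hk
  have hpow : ∀ j, chiFour (p ^ (j + 1)) + chiFour (p ^ j) = 1 + chiFour p := fun j => by
    induction j with
    | zero => simp [isMultiplicative_chiFour.1, add_comm]
    | succ j ih =>
      rw [← ih, pow_succ p (j + 1), pow_succ p j, chiFour_mul, chiFour_mul]
      linear_combination chiFour (p ^ j) * chiFour_sq_eq_one hpn.coprime_mul_right_right
  obtain ⟨j, rfl⟩ := Nat.exists_eq_succ_of_ne_zero hk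
  rw [hcount, mul_apply_prime_pow _ _ hp, Finset.sum_range_succ', ← hpow j]
  simp only [squareMoebius_mul_zeta_prime_pow hp]
  simp [add_comm]

/-! ### The hyperbola method for the zeta function times the quadratic character -/

lemma sum_Ioc_filter_dvd {M : Type*} [AddCommMonoid M] {e : ℕ} (he : 0 < e) (f : ℕ → M) (b : ℕ) :
    ∑ d ∈ Finset.Ioc 0 b with e ∣ d, f d = ∑ j ∈ Finset.Ioc 0 (b / e), f (e * j) := by
  refine Finset.sum_nbij' (fun d => d / e) (fun j => e * j) ?_ ?_ ?_ ?_ ?_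
  · intro d hd
    simp only [Finset.mem_filter, Finset.mem_Ioc] at hd ⊢
    exact ⟨Nat.div_pos (Nat.le_of_dvd hd.1.1 hd.2) he, Nat.div_le_div_right hd.1.2⟩
  · intro j hj
    simp only [Finset.mem_filter, Finset.mem_Ioc] at hj ⊢
    exact ⟨⟨Nat.mul_pos he hj.1, mul_comm j e ▸ (Nat.le_div_iff_mul_le he).mp hj.2⟩,
      dvd_mul_right e j⟩
  · exact fun d hd => Nat.mul_div_cancel' (Finset.mem_filter.mp hd).2
  · exact fun j _ => Nat.mul_div_cancel_left j he
  · exact fun d hd => by rw [Nat.mul_div_cancel' (Finset.mem_filter.mp hd).2]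

lemma sum_moebius_divisors_filter_dvd {N : ℕ} (hN : N ≠ 0) (d : ℕ) :
    ∑ e ∈ N.divisors with e ∣ d, ArithmeticFunction.moebius e = if d.Coprime N then 1 else 0 := by
  have hfilter : N.divisors.filter (· ∣ d) = (d.gcd N).divisors := by
    ext e
    simp only [Nat.mem_divisors, Finset.mem_filter, Nat.dvd_gcd_iff]
    have := Nat.gcd_ne_zero_right (m := d) hN
    tauto
  rw [hfilter, ← ArithmeticFunction.coe_zeta_mul_apply, ArithmeticFunction.coe_zeta_mul_moebius,
    ArithmeticFunction.one_apply]

lemma sum_coprime_eq_sum_divisors {R : Type*} [CommRing R] {N : ℕ} (hN : N ≠ 0) (f : ℕ → R)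
    (b : ℕ) : ∑ d ∈ Finset.Ioc 0 b, (if d.Coprime N then f d else 0) =
      ∑ e ∈ N.divisors, (ArithmeticFunction.moebius e : R) *
        ∑ j ∈ Finset.Ioc 0 (b / e), f (e * j) := by
  have hind : ∀ d, (if d.Coprime N then f d else 0) =
      ∑ e ∈ N.divisors, if e ∣ d then (ArithmeticFunction.moebius e : R) * f d else 0 := by
    intro d
    rw [← Finset.sum_filter, ← Finset.sum_mul, ← Int.cast_sum,
      sum_moebius_divisors_filter_dvd hN]
    split_ifs <;> simp
  rw [Finset.sum_congr rfl fun d _ => hind d, Finset.sum_comm]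
  refine Finset.sum_congr rfl fun e he => ?_
  rw [← Finset.sum_filter, ← Finset.mul_sum, sum_Ioc_filter_dvd (Nat.pos_of_mem_divisors he)]

/-- The density of the integers coprime to `N`. -/
noncomputable def coprimeDensity (N : ℕ) : ℝ :=
  ∑ e ∈ N.divisors, (ArithmeticFunction.moebius e : ℝ) / e

lemma abs_moebius_cast_le_one (e : ℕ) : |(ArithmeticFunction.moebius e : ℝ)| ≤ 1 := by
  exact_mod_cast ArithmeticFunction.abs_moebius_le_one (n := e)

lemma abs_coprimeDensity_le (N : ℕ) : |coprimeDensity N| ≤ N.divisors.card := by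
  rw [coprimeDensity, ← nsmul_one, ← Finset.sum_const]
  refine (Finset.abs_sum_le_sum_abs _ _).trans (Finset.sum_le_sum fun e he => ?_)
  have he1 : (1 : ℝ) ≤ e := by exact_mod_cast Nat.pos_of_mem_divisors he
  rw [abs_div, Nat.abs_cast]
  exact div_le_one_of_le₀ ((abs_moebius_cast_le_one e).trans he1) (Nat.cast_nonneg e)

lemma abs_coprimePart_zeta_le_one (N d : ℕ) :
    |coprimePart N (ArithmeticFunction.zeta : ArithmeticFunction ℝ) d| ≤ 1 := by
  rw [coprimePart_apply, ArithmeticFunction.natCoe_apply, ArithmeticFunction.zeta_apply]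
  split_ifs <;> simp

lemma abs_sum_coprimePart_zeta_sub_le {N : ℕ} (hN : N ≠ 0) {z : ℝ} (hz : 0 ≤ z) :
    |∑ k ∈ Finset.Ioc 0 ⌊z⌋₊, coprimePart N (ArithmeticFunction.zeta : ArithmeticFunction ℝ) k -
      coprimeDensity N * z| ≤ N.divisors.card := by
  have hzeta : ∑ k ∈ Finset.Ioc 0 ⌊z⌋₊,
      coprimePart N (ArithmeticFunction.zeta : ArithmeticFunction ℝ) k =
      ∑ k ∈ Finset.Ioc 0 ⌊z⌋₊, if k.Coprime N then (1 : ℝ) else 0 := by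
    refine Finset.sum_congr rfl fun k hk => ?_
    simp [coprimePart_apply, (Finset.mem_Ioc.mp hk).1.ne']
  rw [hzeta, sum_coprime_eq_sum_divisors hN, coprimeDensity, Finset.sum_mul,
    ← Finset.sum_sub_distrib, ← nsmul_one, ← Finset.sum_const]
  refine (Finset.abs_sum_le_sum_abs _ _).trans (Finset.sum_le_sum fun e _ => ?_)
  have hfloor : |(⌊z / e⌋₊ : ℝ) - z / e| ≤ 1 := by
    rw [abs_sub_comm, abs_of_nonneg (sub_nonneg.mpr (Nat.floor_le (by positivity)))]
    linarith [Nat.lt_floor_add_one (z / e)]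
  rw [← Nat.floor_div_natCast, Finset.sum_const, Nat.card_Ioc, Nat.sub_zero, nsmul_one,
    div_mul_eq_mul_div, mul_div_assoc, ← mul_sub, abs_mul]
  exact mul_le_one₀ (abs_moebius_cast_le_one e) (abs_nonneg _) hfloor

lemma abs_chiFour_le_one (m : ℕ) : |chiFour m| ≤ 1 := by
  have hχ : ∀ a : ZMod 4, |ZMod.χ₄ a| ≤ 1 := by decide
  rw [chiFour_apply]
  exact_mod_cast hχ m

lemma sum_chiFour_eq (m : ℕ) :
    ∑ j ∈ Finset.Ioc 0 m, chiFour j = if m % 4 = 1 ∨ m % 4 = 2 then 1 else 0 := by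
  induction m with
  | zero => simp
  | succ m ih =>
    rw [Finset.sum_Ioc_succ_top (Nat.zero_le m), ih, chiFour_apply, ZMod.χ₄_nat_eq_if_mod_four]
    split_ifs <;> first | omega | norm_num

lemma abs_coprimePart_chiFour_le_one (N d : ℕ) : |coprimePart N chiFour d| ≤ 1 := by
  rw [coprimePart_apply]
  split_ifs
  · exact abs_chiFour_le_one d
  · simp

lemma abs_sum_coprimePart_chiFour_le {N : ℕ} (hN : N ≠ 0) (a b : ℕ) :
    |∑ d ∈ Finset.Ioc a b, coprimePart N chiFour d| ≤ N.divisors.card := by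
  rcases lt_or_ge b a with hba | hab
  · simp [Finset.Ioc_eq_empty_of_le hba.le]
  have hmul : ∀ e c, ∑ j ∈ Finset.Ioc 0 c, chiFour (e * j) =
      chiFour e * ∑ j ∈ Finset.Ioc 0 c, chiFour j := by
    intro e c
    simp only [chiFour_mul, Finset.mul_sum]
  rw [← add_sub_cancel_left (∑ d ∈ Finset.Ioc 0 a, coprimePart N chiFour d)
    (∑ d ∈ Finset.Ioc a b, coprimePart N chiFour d),
    Finset.sum_Ioc_consecutive _ (Nat.zero_le a) hab]
  simp only [coprimePart_apply]
  rw [sum_coprime_eq_sum_divisors hN, sum_coprime_eq_sum_divisors hN,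
    ← Finset.sum_sub_distrib, ← nsmul_one, ← Finset.sum_const]
  refine (Finset.abs_sum_le_sum_abs _ _).trans (Finset.sum_le_sum fun e _ => ?_)
  rw [hmul, hmul, ← mul_sub, ← mul_sub, abs_mul, abs_mul]
  refine mul_le_one₀ (abs_moebius_cast_le_one e) (by positivity)
    (mul_le_one₀ (abs_chiFour_le_one e) (abs_nonneg _) ?_)
  rw [sum_chiFour_eq, sum_chiFour_eq]
  split_ifs <;> norm_num

lemma abs_sum_div_sub_le {f : ℕ → ℝ} {M : ℝ} {a b : ℕ} (hab : a ≤ b)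
    (hf : ∀ c, |∑ d ∈ Finset.Ioc a c, f d| ≤ M) :
    |∑ d ∈ Finset.Ioc a b, f d / d - (∑ d ∈ Finset.Ioc a b, f d) / (b + 1)| ≤
      M / (a + 1) - M / (b + 1) := by
  induction b, hab using Nat.le_induction with
  | base => simp
  | succ b hab ih =>
    have hsum := hf (b + 1)
    rw [Finset.sum_Ioc_succ_top hab] at hsum
    rw [Finset.sum_Ioc_succ_top hab, Finset.sum_Ioc_succ_top hab]
    set S := ∑ d ∈ Finset.Ioc a b, f d
    set D := ∑ d ∈ Finset.Ioc a b, f d / d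
    set w : ℝ := 1 / ((b : ℝ) + 1) - 1 / (b + 1 + 1) with hw_def
    have hw : 0 ≤ w := sub_nonneg.mpr (one_div_le_one_div_of_le (by positivity) (by linarith))
    push_cast
    calc |D + f (b + 1) / (b + 1) - (S + f (b + 1)) / (b + 1 + 1)|
        = |(D - S / (b + 1)) + (S + f (b + 1)) * w| := by rw [hw_def]; congr 1; ring
      _ ≤ |D - S / (b + 1)| + |S + f (b + 1)| * w := by
          rw [← abs_of_nonneg hw, ← abs_mul, abs_of_nonneg hw]
          exact abs_add_le _ _
      _ ≤ (M / (a + 1) - M / (b + 1)) + M * w :=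
          add_le_add ih (mul_le_mul_of_nonneg_right hsum hw)
      _ = M / (a + 1) - M / (b + 1 + 1) := by rw [hw_def]; ring

lemma abs_sum_div_le {f : ℕ → ℝ} {M : ℝ} {a b : ℕ} (hab : a ≤ b)
    (hf : ∀ c, |∑ d ∈ Finset.Ioc a c, f d| ≤ M) :
    |∑ d ∈ Finset.Ioc a b, f d / d| ≤ M / (a + 1) := by
  have hlast : |(∑ d ∈ Finset.Ioc a b, f d) / ((b : ℝ) + 1)| ≤ M / (b + 1) := by
    rw [abs_div, abs_of_pos (by positivity : (0 : ℝ) < b + 1)]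
    exact div_le_div_of_nonneg_right (hf b) (by positivity)
  linarith [abs_sub_abs_le_abs_sub (∑ d ∈ Finset.Ioc a b, f d / d)
    ((∑ d ∈ Finset.Ioc a b, f d) / ((b : ℝ) + 1)), abs_sum_div_sub_le hab hf]

lemma sum_Ioc_mul_hyperbola {R : Type*} [CommSemiring R] (f g : ArithmeticFunction R) (Y : ℕ) :
    ∑ m ∈ Finset.Ioc 0 Y, (f * g) m =
      ∑ d ∈ Finset.Ioc 0 Y.sqrt, g d * ∑ k ∈ Finset.Ioc 0 (Y / d), f k +
      ∑ k ∈ Finset.Ioc 0 Y.sqrt, f k * ∑ d ∈ Finset.Ioc Y.sqrt (Y / k), g d := by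
  rw [mul_comm, ArithmeticFunction.sum_Ioc_mul_eq_sum_sum,
    ← Finset.sum_Ioc_consecutive _ (Nat.zero_le _) (Nat.sqrt_le_self Y)]
  congr 1
  simp only [Finset.mul_sum]
  rw [Finset.sum_comm' (t' := Finset.Ioc 0 Y.sqrt) (s' := fun k => Finset.Ioc Y.sqrt (Y / k))]
  · exact Finset.sum_congr rfl fun k _ => Finset.sum_congr rfl fun d _ => mul_comm _ _
  · intro d k
    simp only [Finset.mem_Ioc]
    constructor
    · rintro ⟨⟨hd, -⟩, hk, hkd⟩
      rw [Nat.le_div_iff_mul_le (by omega)] at hkd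
      refine ⟨⟨hd, (Nat.le_div_iff_mul_le hk).mpr (mul_comm k d ▸ hkd)⟩, hk, ?_⟩
      by_contra! hlt
      exact (Nat.lt_succ_sqrt Y).not_ge ((Nat.mul_le_mul hlt hd).trans hkd)
    · rintro ⟨⟨hd, hdk⟩, hk, -⟩
      rw [Nat.le_div_iff_mul_le hk] at hdk
      exact ⟨⟨hd, (Nat.le_mul_of_pos_right d hk).trans hdk⟩, hk,
        (Nat.le_div_iff_mul_le (by omega)).mpr (mul_comm d k ▸ hdk)⟩

/-- The coefficient of the main term in the summatory function of `1 * χ₄` restricted to the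
integers coprime to `N`; the sum for `L(1, χ₄)` is truncated at `n`. -/
noncomputable def meanCoeff (N n : ℕ) : ℝ :=
  coprimeDensity N * ∑ d ∈ Finset.Ioc 0 n, coprimePart N chiFour d / d

section Hyperbola

variable {N : ℕ} {y : ℝ}

lemma abs_sum_chiFour_mul_sum_zeta_sub_le (hN : N ≠ 0) (hy : 0 ≤ y) (T : ℕ) :
    |∑ d ∈ Finset.Ioc 0 T, coprimePart N chiFour d * ∑ k ∈ Finset.Ioc 0 (⌊y⌋₊ / d),
        coprimePart N (ArithmeticFunction.zeta : ArithmeticFunction ℝ) k -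
      coprimeDensity N * y * ∑ d ∈ Finset.Ioc 0 T, coprimePart N chiFour d / d| ≤
      T * N.divisors.card := by
  rw [Finset.mul_sum, ← Finset.sum_sub_distrib]
  refine (Finset.abs_sum_le_sum_abs _ _).trans
    ((Finset.sum_le_card_nsmul _ _ (N.divisors.card : ℝ) fun d _ => ?_).trans_eq (by simp))
  rw [mul_comm (coprimeDensity N * y), div_mul_eq_mul_div, mul_div_assoc, mul_div_assoc, ← mul_sub,
    abs_mul, ← Nat.floor_div_natCast]
  exact (mul_le_of_le_one_left (abs_nonneg _) (abs_coprimePart_chiFour_le_one N d)).trans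
    (abs_sum_coprimePart_zeta_sub_le hN (by positivity))

lemma abs_sum_zeta_mul_sum_chiFour_le (hN : N ≠ 0) (T Y : ℕ) :
    |∑ k ∈ Finset.Ioc 0 T, coprimePart N (ArithmeticFunction.zeta : ArithmeticFunction ℝ) k *
      ∑ d ∈ Finset.Ioc T (Y / k), coprimePart N chiFour d| ≤ T * N.divisors.card := by
  refine (Finset.abs_sum_le_sum_abs _ _).trans
    ((Finset.sum_le_card_nsmul _ _ (N.divisors.card : ℝ) fun k _ => ?_).trans_eq (by simp))
  rw [abs_mul]
  exact (mul_le_of_le_one_left (abs_nonneg _) (abs_coprimePart_zeta_le_one N k)).trans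
    (abs_sum_coprimePart_chiFour_le hN T (Y / k))

lemma abs_meanCoeff_mul_sub_le (hN : N ≠ 0) (hy : 0 ≤ y) {T n : ℕ} (hTn : T ≤ n)
    (hyT : √y ≤ T + 1) :
    |meanCoeff N n * y - coprimeDensity N * y * ∑ d ∈ Finset.Ioc 0 T, coprimePart N chiFour d / d|
      ≤ (N.divisors.card : ℝ) ^ 2 * √y := by
  rw [meanCoeff, ← Finset.sum_Ioc_consecutive _ (Nat.zero_le T) hTn, mul_right_comm, ← mul_sub,
    add_sub_cancel_left, abs_mul, abs_mul, abs_of_nonneg hy]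
  calc |coprimeDensity N| * y * |∑ d ∈ Finset.Ioc T n, coprimePart N chiFour d / d|
      ≤ N.divisors.card * y * (N.divisors.card / (T + 1)) := by
        gcongr
        · exact abs_coprimeDensity_le N
        · exact abs_sum_div_le hTn (abs_sum_coprimePart_chiFour_le hN T)
    _ = (N.divisors.card : ℝ) ^ 2 * (y / (T + 1)) := by ring
    _ ≤ (N.divisors.card : ℝ) ^ 2 * √y := by
        gcongr
        rw [div_le_iff₀ (by positivity)]
        exact (Real.mul_self_sqrt hy).symm.trans_le (by gcongr)

lemma abs_sum_sub_meanCoeff_mul_le (hN : N ≠ 0) (hy : 0 ≤ y) {n : ℕ} (hyn : ⌊y⌋₊ ≤ n) :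
    |∑ m ∈ Finset.Ioc 0 ⌊y⌋₊, (coprimePart N (ArithmeticFunction.zeta : ArithmeticFunction ℝ) *
      coprimePart N chiFour) m - meanCoeff N n * y| ≤ 3 * (N.divisors.card : ℝ) ^ 2 * √y := by
  set T := ⌊y⌋₊.sqrt
  have hTy : (T : ℝ) ≤ √y :=
    Real.nat_sqrt_le_real_sqrt.trans (Real.sqrt_le_sqrt (Nat.floor_le hy))
  have hyT : √y ≤ T + 1 := by
    rw [Real.sqrt_le_left (by positivity)]
    have : ((⌊y⌋₊ : ℝ) + 1) ≤ (T + 1) ^ 2 := by exact_mod_cast Nat.succ_le_succ_sqrt' ⌊y⌋₊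
    linarith [Nat.lt_floor_add_one y]
  have hτ : (T : ℝ) * N.divisors.card ≤ (N.divisors.card : ℝ) ^ 2 * √y := by
    rw [mul_comm]
    gcongr
    exact_mod_cast Nat.le_self_pow two_ne_zero _
  have hmain := abs_sum_chiFour_mul_sum_zeta_sub_le hN hy T
  have htail := abs_sum_zeta_mul_sum_chiFour_le hN T ⌊y⌋₊
  have hmean := abs_meanCoeff_mul_sub_le hN hy ((Nat.sqrt_le_self _).trans hyn) hyT
  rw [sum_Ioc_mul_hyperbola]
  rw [abs_le] at hmain htail hmean ⊢
  constructor <;> linarith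

end Hyperbola

/-! ### A lower bound for the number of roots of `X ^ 2 + 1` -/

lemma isFormRoot_one_iff {A H : ℕ} : IsFormRoot 1 A H ↔ A ∣ H ^ 2 + 1 := by
  rw [isFormRoot_iff_forall_prime, one_pow]
  refine ⟨And.left, fun hA => ⟨hA, fun p hp hpA hpH hpmul => ?_⟩⟩
  have hpH' : ¬ p ∣ H := fun hdvd => hp.one_lt.ne' <|
    Nat.dvd_one.mp ((Nat.dvd_add_right (dvd_pow hdvd two_ne_zero)).mp (hpA.trans hA))
  obtain rfl : p = 2 :=
    (Nat.prime_dvd_prime_iff_eq hp Nat.prime_two).mp ((hp.dvd_mul.mp hpH).resolve_right hpH')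
  -- An odd square is `1` modulo `4`.
  have hfour : 2 * 2 ∣ H ^ 2 + 1 := (mul_dvd_mul_left 2 hpA).trans hpmul
  obtain ⟨c, rfl⟩ : Odd H := Nat.odd_iff.mpr (by omega)
  obtain ⟨d, hd⟩ := hfour
  ring_nf at hd
  omega

/-- The coprime pairs of positive integers in a box of side `K`. -/
def coprimePairs (K : ℕ) : Finset (ℕ × ℕ) :=
  {x ∈ Finset.Ioc 0 K ×ˢ Finset.Ioc 0 K | x.1.Coprime x.2}

lemma mem_coprimePairs {K : ℕ} {x : ℕ × ℕ} :
    x ∈ coprimePairs K ↔ ((0 < x.1 ∧ x.1 ≤ K) ∧ 0 < x.2 ∧ x.2 ≤ K) ∧ x.1.Coprime x.2 := by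
  simp only [coprimePairs, Finset.mem_filter, Finset.mem_product, Finset.mem_Ioc]

section SumTwoSquares

variable {u v u' v' H : ℕ}

lemma exists_mul_modEq_of_coprime (h : u.Coprime v) (hu : 0 < u) :
    ∃ H < u ^ 2 + v ^ 2, H * v ≡ u [MOD u ^ 2 + v ^ 2] := by
  have hv : v.Coprime (u ^ 2 + v ^ 2) := by
    rw [pow_two v, Nat.coprime_add_mul_left_right]
    exact (h.pow_left 2).symm
  obtain ⟨H, hH, hmod⟩ := Nat.exists_mul_mod_eq_of_coprime u hv (by positivity)
  exact ⟨H, hH, by rwa [mul_comm]⟩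

lemma dvd_sq_add_one_of_mul_modEq (h : u.Coprime v) (hH : H * v ≡ u [MOD u ^ 2 + v ^ 2]) :
    u ^ 2 + v ^ 2 ∣ H ^ 2 + 1 := by
  have hv : (u ^ 2 + v ^ 2).Coprime (v ^ 2) := by
    rw [Nat.coprime_add_self_left]
    exact h.pow 2 2
  refine hv.dvd_of_dvd_mul_right ?_
  rw [add_mul, one_mul, ← mul_pow]
  exact (((hH.pow 2).add_right (v ^ 2)).dvd_iff dvd_rfl).mpr dvd_rfl

lemma eq_of_mul_modEq_of_sq_add_sq_eq (h : u.Coprime v) (hu : 0 < u) (hu' : 0 < u')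
    (hsq : u ^ 2 + v ^ 2 = u' ^ 2 + v' ^ 2) (hH : H * v ≡ u [MOD u ^ 2 + v ^ 2])
    (hH' : H * v' ≡ u' [MOD u ^ 2 + v ^ 2]) : u = u' ∧ v = v' := by
  have hdvd : u ^ 2 + v ^ 2 ∣ u * u' + v * v' := by
    refine (((hH.mul hH').add_right (v * v')).dvd_iff dvd_rfl).mp ?_
    rw [show H * v * (H * v') + v * v' = (H ^ 2 + 1) * (v * v') by ring]
    exact (dvd_sq_add_one_of_mul_modEq h hH).mul_right _
  -- By Cauchy–Schwarz `u * u' + v * v'` is at most the common norm, with equality only for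
  -- equal vectors.
  have hle := Nat.le_of_dvd (by positivity) hdvd
  zify at hle hsq
  have hdist : ((u : ℤ) - u') ^ 2 + ((v : ℤ) - v') ^ 2 ≤ 0 := by linarith
  have hudist : ((u : ℤ) - u') ^ 2 = 0 := by
    linarith [hdist, sq_nonneg ((u : ℤ) - u'), sq_nonneg ((v : ℤ) - v')]
  have hvdist : ((v : ℤ) - v') ^ 2 = 0 := by
    linarith [hdist, sq_nonneg ((u : ℤ) - u'), sq_nonneg ((v : ℤ) - v')]
  rw [sq_eq_zero_iff, sub_eq_zero] at hudist hvdist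
  exact ⟨by exact_mod_cast hudist, by exact_mod_cast hvdist⟩

end SumTwoSquares

lemma card_coprimePairs_le {K n : ℕ} (hK : 2 * K ^ 2 ≤ n) :
    (coprimePairs K).card ≤ ∑ A ∈ Finset.Ioc 0 n, formRootCount 1 A := by
  simp only [formRootCount]
  rw [← Finset.card_sigma]
  have hroot : ∀ x : ℕ × ℕ, ∃ H, x ∈ coprimePairs K →
      H < x.1 ^ 2 + x.2 ^ 2 ∧ H * x.2 ≡ x.1 [MOD x.1 ^ 2 + x.2 ^ 2] := by
    intro x
    by_cases hx : x ∈ coprimePairs K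
    · obtain ⟨⟨⟨hu, -⟩, -⟩, hcop⟩ := mem_coprimePairs.mp hx
      obtain ⟨H, hH⟩ := exists_mul_modEq_of_coprime hcop hu
      exact ⟨H, fun _ => hH⟩
    · exact ⟨0, fun h => absurd h hx⟩
  choose root hlt hmod using hroot
  refine Finset.card_le_card_of_injOn (fun x => (⟨x.1 ^ 2 + x.2 ^ 2, root x⟩ : Σ _ : ℕ, ℕ)) ?_ ?_
  · intro x hx
    obtain ⟨⟨⟨hu, huK⟩, -, hvK⟩, hcop⟩ := mem_coprimePairs.mp hx
    have huK' := Nat.pow_le_pow_left huK 2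
    have hvK' := Nat.pow_le_pow_left hvK 2
    simp only [Finset.coe_sigma, Set.mem_sigma_iff, Finset.mem_coe, Finset.mem_Ioc,
      Finset.mem_filter, Finset.mem_range, isFormRoot_one_iff]
    exact ⟨⟨by positivity, by linarith⟩, hlt x hx, dvd_sq_add_one_of_mul_modEq hcop (hmod x hx)⟩
  · intro x hx y hy hxy
    simp only [Sigma.mk.injEq, heq_eq_eq] at hxy
    have hmody := hmod y hy
    rw [← hxy.1, ← hxy.2] at hmody
    obtain ⟨⟨⟨hu, -⟩, -⟩, hcop⟩ := mem_coprimePairs.mp hx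
    obtain ⟨⟨⟨hu', -⟩, -⟩, -⟩ := mem_coprimePairs.mp hy
    exact Prod.ext_iff.mpr
      (eq_of_mul_modEq_of_sq_add_sq_eq hcop hu hu' hxy.1 (hmod x hx) hmody)

lemma sum_Ioc_one_inv_sq_le (K : ℕ) : ∑ g ∈ Finset.Ioc 1 K, ((g : ℝ) ^ 2)⁻¹ ≤ 3 / 4 := by
  rcases lt_or_ge K 2 with hK | hK
  · rw [Finset.Ioc_eq_empty_of_le (by omega), Finset.sum_empty]
    norm_num
  have htwo : ∑ g ∈ Finset.Ioc (1 : ℕ) 2, ((g : ℝ) ^ 2)⁻¹ = 1 / 4 := by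
    rw [Finset.sum_Ioc_succ_top le_rfl]
    norm_num
  have htail := sum_Ioc_inv_sq_le_sub (α := ℝ) two_ne_zero hK
  have hK0 : (0 : ℝ) ≤ (K : ℝ)⁻¹ := by positivity
  rw [← Finset.sum_Ioc_consecutive _ one_le_two hK, htwo]
  push_cast at htail
  linarith

lemma card_not_coprime_pairs_le (K : ℕ) :
    (((Finset.Ioc 0 K ×ˢ Finset.Ioc 0 K).filter fun x => ¬ x.1.Coprime x.2).card : ℝ) ≤
      ∑ g ∈ Finset.Ioc 1 K, (K : ℝ) ^ 2 * ((g : ℝ) ^ 2)⁻¹ := by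
  have hsub : ((Finset.Ioc 0 K ×ˢ Finset.Ioc 0 K).filter fun x => ¬ x.1.Coprime x.2) ⊆
      (Finset.Ioc 1 K).biUnion fun g =>
        ((Finset.Ioc 0 K).filter (g ∣ ·)) ×ˢ ((Finset.Ioc 0 K).filter (g ∣ ·)) := by
    rintro ⟨u, v⟩ hx
    simp only [Finset.mem_filter, Finset.mem_product, Finset.mem_Ioc, Finset.mem_biUnion] at hx ⊢
    obtain ⟨⟨hu, hv⟩, hcop⟩ := hx
    have hgcd : 0 < u.gcd v := Nat.gcd_pos_of_pos_left v hu.1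
    have hgcd' : u.gcd v ≠ 1 := hcop
    have hgu := Nat.gcd_dvd_left u v
    exact ⟨u.gcd v, ⟨by omega, (Nat.le_of_dvd hu.1 hgu).trans hu.2⟩, ⟨hu, hgu⟩, hv,
      Nat.gcd_dvd_right u v⟩
  have hcard : ((Finset.Ioc 0 K ×ˢ Finset.Ioc 0 K).filter fun x => ¬ x.1.Coprime x.2).card ≤
      ∑ g ∈ Finset.Ioc 1 K, (K / g) ^ 2 := by
    refine (Finset.card_le_card hsub).trans (Finset.card_biUnion_le.trans_eq ?_)
    exact Finset.sum_congr rfl fun g _ => by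
      rw [Finset.card_product, Nat.Ioc_filter_dvd_card_eq_div, pow_two]
  refine (Nat.cast_le.mpr hcard).trans ?_
  push_cast
  refine Finset.sum_le_sum fun g _ => ?_
  rw [← div_eq_mul_inv, ← div_pow]
  exact pow_le_pow_left₀ (Nat.cast_nonneg _) Nat.cast_div_le 2

lemma sq_le_four_mul_card_coprimePairs (K : ℕ) : K ^ 2 ≤ 4 * (coprimePairs K).card := by
  have hcompl := card_not_coprime_pairs_le K
  rw [← Finset.mul_sum] at hcompl
  have hbound := hcompl.trans
    (mul_le_mul_of_nonneg_left (sum_Ioc_one_inv_sq_le K) (sq_nonneg (K : ℝ)))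
  have hsplit := Finset.card_filter_add_card_filter_not (s := Finset.Ioc 0 K ×ˢ Finset.Ioc 0 K)
    (fun x => x.1.Coprime x.2)
  rw [Finset.card_product, Nat.card_Ioc, Nat.sub_zero, ← pow_two, ← coprimePairs] at hsplit
  have hsplit' := congrArg (Nat.cast (R := ℝ)) hsplit
  push_cast at hsplit'
  have hreal : (K : ℝ) ^ 2 ≤ 4 * (coprimePairs K).card := by linarith
  exact_mod_cast hreal

lemma le_sum_formRootCount_one {n : ℕ} (hn : 2 ≤ n) :
    n ≤ 32 * ∑ A ∈ Finset.Ioc 0 n, formRootCount 1 A := by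
  set K := (n / 2).sqrt
  have hK1 : 1 ≤ K := Nat.le_sqrt.mpr (by omega)
  have hKle : K ^ 2 ≤ n / 2 := Nat.sqrt_le' (n / 2)
  have hKlt : n / 2 < (K + 1) ^ 2 := Nat.lt_succ_sqrt' (n / 2)
  have hKn : n ≤ 8 * K ^ 2 := by
    have hdouble : (K + 1) ^ 2 ≤ (2 * K) ^ 2 := Nat.pow_le_pow_left (by omega) 2
    rw [mul_pow] at hdouble
    omega
  have hpairs := card_coprimePairs_le (K := K) (n := n) (by omega)
  have hdense := sq_le_four_mul_card_coprimePairs K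
  omega

/-! ### Subpolynomial sequences -/

/-- A sequence growing slower than every positive power. -/
def IsSubpoly (f : ℕ → ℝ) : Prop :=
  ∀ ε : ℝ, 0 < ε → f =O[Filter.atTop] fun n : ℕ => (n : ℝ) ^ ε

namespace IsSubpoly

lemma mul {f g : ℕ → ℝ} (hf : IsSubpoly f) (hg : IsSubpoly g) :
    IsSubpoly fun n => f n * g n := by
  intro ε hε
  refine ((hf (ε / 2) (by positivity)).mul (hg (ε / 2) (by positivity))).congr_right fun n => ?_
  rw [← Real.rpow_add_of_nonneg (Nat.cast_nonneg n) (by positivity) (by positivity), add_halves]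

lemma add {f g : ℕ → ℝ} (hf : IsSubpoly f) (hg : IsSubpoly g) :
    IsSubpoly fun n => f n + g n := fun ε hε => (hf ε hε).add (hg ε hε)

lemma of_le {f : ℕ → ℝ} (k : ℝ) (hk : 0 < k)
    (h : ∀ ε : ℝ, 0 < ε → ∃ C : ℝ, ∀ n : ℕ, 1 ≤ n → |f n| ≤ C * (n : ℝ) ^ (k * ε)) :
    IsSubpoly f := by
  intro ε hε
  obtain ⟨C, hC⟩ := h (ε / k) (by positivity)
  refine Asymptotics.IsBigO.of_bound C ?_
  filter_upwards [Filter.eventually_ge_atTop 1] with n hn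
  rw [Real.norm_eq_abs, Real.norm_eq_abs, abs_of_nonneg (Real.rpow_nonneg (Nat.cast_nonneg n) _)]
  simpa only [mul_div_cancel₀ ε hk.ne'] using hC n hn

lemma const (c : ℝ) : IsSubpoly fun _ => c := by
  refine of_le 1 one_pos fun ε hε => ⟨|c|, fun n hn => ?_⟩
  exact le_mul_of_one_le_right (abs_nonneg c)
    (Real.one_le_rpow (by exact_mod_cast hn) (by positivity))

lemma tendsto_div {f : ℕ → ℝ} (hf : IsSubpoly f) {δ : ℝ} (hδ : 0 < δ) :
    Filter.Tendsto (fun n : ℕ => f n / (n : ℝ) ^ δ) Filter.atTop (nhds 0) := by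
  refine ((hf (δ / 2) (by positivity)).mul
    (Asymptotics.isBigO_refl (fun n : ℕ => ((n : ℝ) ^ δ)⁻¹) Filter.atTop)).trans_tendsto ?_
  refine ((tendsto_rpow_neg_atTop (half_pos hδ)).comp tendsto_natCast_atTop_atTop).congr' ?_
  filter_upwards [Filter.eventually_gt_atTop 0] with n hn
  have hn' : (0 : ℝ) < n := by exact_mod_cast hn
  rw [Function.comp_apply, ← Real.rpow_neg hn'.le, ← Real.rpow_add hn']
  congr 1
  ring

end IsSubpoly

lemma isSubpoly_card_divisors_mul_pow {a k : ℕ} (ha : 0 < a) (hk : 0 < k) :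
    IsSubpoly fun n => ((a * n ^ k).divisors.card : ℝ) := by
  refine .of_le k (by exact_mod_cast hk) fun ε hε => ?_
  obtain ⟨C, -, hC⟩ := card_divisors_le_rpow hε
  refine ⟨C * a ^ ε, fun n hn => ?_⟩
  rw [Nat.abs_cast]
  refine (hC (a * n ^ k) (by positivity)).trans_eq ?_
  push_cast
  rw [Real.mul_rpow (Nat.cast_nonneg a) (by positivity),
    ← Real.rpow_natCast_mul (Nat.cast_nonneg n), mul_assoc]

/-- The number of integers up to `n` composed of primes dividing `2 * n`. -/
def smoothCount (n : ℕ) : ℕ :=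
  ((Finset.Ioc 0 n).filter fun m => m.primeFactors ⊆ (2 * n).primeFactors).card

/-- The maximal number of divisors of an integer up to `n`. -/
def maxDivisors (n : ℕ) : ℕ := (Finset.Ioc 0 n).sup fun m => m.divisors.card

lemma card_divisors_le_maxDivisors {m n : ℕ} (hm : 0 < m) (hmn : m ≤ n) :
    m.divisors.card ≤ maxDivisors n :=
  Finset.le_sup (f := fun m : ℕ => m.divisors.card) (Finset.mem_Ioc.mpr ⟨hm, hmn⟩)

lemma isSubpoly_smoothCount : IsSubpoly fun n => (smoothCount n : ℝ) := by
  refine .of_le 2 two_pos fun ε hε => ?_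
  obtain ⟨C, -, hC⟩ := card_primeFactors_subset_le_rpow hε
  refine ⟨C * 2 ^ ε, fun n hn => ?_⟩
  rw [Nat.abs_cast]
  refine (hC (2 * n) (by omega) n).trans_eq ?_
  push_cast
  rw [Real.mul_rpow zero_le_two (Nat.cast_nonneg n), two_mul ε,
    Real.rpow_add_of_nonneg (Nat.cast_nonneg n) hε.le hε.le]
  ring

lemma isSubpoly_maxDivisors : IsSubpoly fun n => (maxDivisors n : ℝ) := by
  refine .of_le 1 one_pos fun ε hε => ?_
  obtain ⟨C, hC0, hC⟩ := card_divisors_le_rpow hε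
  refine ⟨C, fun n hn => ?_⟩
  rw [Nat.abs_cast, one_mul]
  obtain ⟨m, hm, hmax⟩ := Finset.exists_mem_eq_sup (Finset.Ioc 0 n)
    ⟨1, Finset.mem_Ioc.mpr ⟨one_pos, hn⟩⟩ (fun m : ℕ => m.divisors.card)
  rw [Finset.mem_Ioc] at hm
  rw [maxDivisors, hmax]
  refine (hC m (by omega)).trans ?_
  have hmn : (m : ℝ) ≤ n := by exact_mod_cast hm.2
  gcongr

lemma isSubpoly_one_add_log : IsSubpoly fun n => 1 + Real.log n := by
  refine (IsSubpoly.const 1).add (.of_le 1 one_pos fun ε hε => ⟨1 / ε, fun n _ => ?_⟩)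
  rw [abs_of_nonneg (Real.log_natCast_nonneg n), one_mul]
  exact (Real.log_natCast_le_rpow_div n hε).trans_eq (by ring)

/-! ### The summatory function of `formRootCount` -/

lemma abs_smoothPart_formRootFun_le {N n m : ℕ} (hm : m ≠ 0) :
    |smoothPart N (formRootFun n) m| ≤
      if m.primeFactors ⊆ N.primeFactors then m.divisors.card * √m else 0 := by
  rw [smoothPart_apply]
  split_ifs
  · rw [formRootFun_apply, Nat.abs_cast]
    calc (formRootCount n m : ℝ) ≤ ((m.divisors.card * m.sqrt : ℕ) : ℝ) :=
          Nat.cast_le.mpr (formRootCount_le_card_divisors_mul_sqrt hm)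
      _ ≤ m.divisors.card * √m := by
          push_cast
          gcongr
          exact Real.nat_sqrt_le_real_sqrt
  · exact abs_zero.le

lemma sum_smoothPart_div_sqrt_le (n : ℕ) :
    ∑ m ∈ Finset.Ioc 0 n, |smoothPart (2 * n) (formRootFun n) m| / √m ≤
      smoothCount n * maxDivisors n := by
  rw [smoothCount, ← nsmul_eq_mul, ← Finset.sum_const, Finset.sum_filter]
  refine Finset.sum_le_sum fun m hm => ?_
  rw [Finset.mem_Ioc] at hm
  rw [div_le_iff₀ (Real.sqrt_pos.mpr (by exact_mod_cast hm.1))]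
  refine (abs_smoothPart_formRootFun_le (by omega)).trans ?_
  split_ifs
  · gcongr
    exact card_divisors_le_maxDivisors hm.1 hm.2
  · exact (zero_mul _).ge

lemma sum_filter_isSquare_Ioc_inv_sqrt (n : ℕ) :
    ∑ j ∈ Finset.Ioc 0 n with IsSquare j, (√j : ℝ)⁻¹ = ∑ g ∈ Finset.Ioc 0 n.sqrt, (g : ℝ)⁻¹ := by
  refine (Finset.sum_nbij' (fun g => g * g) Nat.sqrt ?_ ?_ ?_ ?_ ?_).symm
  · intro g hg
    rw [Finset.mem_Ioc] at hg
    exact Finset.mem_filter.mpr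
      ⟨Finset.mem_Ioc.mpr ⟨Nat.mul_pos hg.1 hg.1, Nat.le_sqrt.mp hg.2⟩, g, rfl⟩
  · intro j hj
    simp only [Finset.mem_filter, Finset.mem_Ioc] at hj
    exact Finset.mem_Ioc.mpr ⟨Nat.sqrt_pos.mpr hj.1.1, Nat.sqrt_le_sqrt hj.1.2⟩
  · exact fun g _ => Nat.sqrt_eq g
  · intro j hj
    obtain ⟨-, g, rfl⟩ := Finset.mem_filter.mp hj
    rw [Nat.sqrt_eq]
  · intro g _
    rw [Nat.cast_mul, Real.sqrt_mul_self (Nat.cast_nonneg g)]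

lemma sum_squareMoebius_div_sqrt_le (N n : ℕ) :
    ∑ j ∈ Finset.Ioc 0 n, |coprimePart N squareMoebius j| / √j ≤ 1 + Real.log n := by
  have hsquare : ∀ j, |coprimePart N squareMoebius j| / √j ≤
      if IsSquare j then (√j : ℝ)⁻¹ else 0 := by
    intro j
    rw [coprimePart_apply, squareMoebius_apply]
    by_cases hj : IsSquare j
    · rw [if_pos hj, if_pos hj, ← one_div]
      gcongr
      split_ifs
      · exact abs_moebius_cast_le_one _
      · exact abs_zero.trans_le zero_le_one
    · rw [if_neg hj, if_neg hj, ite_self, abs_zero, zero_div]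
  calc ∑ j ∈ Finset.Ioc 0 n, |coprimePart N squareMoebius j| / √j
      ≤ ∑ g ∈ Finset.Ioc 0 n.sqrt, (g : ℝ)⁻¹ := by
        rw [← sum_filter_isSquare_Ioc_inv_sqrt, Finset.sum_filter]
        exact Finset.sum_le_sum fun j _ => hsquare j
    _ ≤ ∑ g ∈ Finset.Ioc 0 n, (g : ℝ)⁻¹ :=
        Finset.sum_le_sum_of_subset_of_nonneg
          (Finset.Ioc_subset_Ioc_right (Nat.sqrt_le_self n)) fun _ _ _ => by positivity
    _ ≤ 1 + Real.log n := by
        refine le_of_eq_of_le ?_ (harmonic_le_one_add_log n)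
        rw [harmonic_eq_sum_Icc]
        push_cast
        rfl

lemma sum_abs_mul_div_sqrt_le (f g : ArithmeticFunction ℝ) (n : ℕ) :
    ∑ k ∈ Finset.Ioc 0 n, |(f * g) k| / √k ≤
      (∑ k ∈ Finset.Ioc 0 n, |f k| / √k) * ∑ k ∈ Finset.Ioc 0 n, |g k| / √k := by
  let normalized (h : ArithmeticFunction ℝ) : ArithmeticFunction ℝ := ⟨fun m => |h m| / √m, by simp⟩
  have hnonneg : ∀ h m, 0 ≤ normalized h m := fun h m => div_nonneg (abs_nonneg _) (by positivity)
  have hmul : ∀ k, |(f * g) k| / √k ≤ (normalized f * normalized g) k := by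
    intro k
    rw [ArithmeticFunction.mul_apply, ArithmeticFunction.mul_apply]
    refine (div_le_div_of_nonneg_right (Finset.abs_sum_le_sum_abs _ _)
      (Real.sqrt_nonneg _)).trans_eq ?_
    rw [Finset.sum_div]
    refine Finset.sum_congr rfl fun x hx => ?_
    rw [← (Nat.mem_divisorsAntidiagonal.mp hx).1, Nat.cast_mul, Real.sqrt_mul (Nat.cast_nonneg _),
      abs_mul, ← div_mul_div_comm]
    rfl
  calc ∑ k ∈ Finset.Ioc 0 n, |(f * g) k| / √k
      ≤ ∑ k ∈ Finset.Ioc 0 n, (normalized f * normalized g) k :=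
        Finset.sum_le_sum fun k _ => hmul k
    _ = ∑ m ∈ Finset.Ioc 0 n, normalized f m * ∑ j ∈ Finset.Ioc 0 (n / m), normalized g j :=
        ArithmeticFunction.sum_Ioc_mul_eq_sum_sum _ _ n
    _ ≤ ∑ m ∈ Finset.Ioc 0 n, normalized f m * ∑ j ∈ Finset.Ioc 0 n, normalized g j :=
        Finset.sum_le_sum fun m _ => mul_le_mul_of_nonneg_left
          (Finset.sum_le_sum_of_subset_of_nonneg
            (Finset.Ioc_subset_Ioc_right (Nat.div_le_self n m)) fun j _ _ => hnonneg g j)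
          (hnonneg f m)
    _ = _ := (Finset.sum_mul _ _ _).symm

/-- The summatory function of `formRootCount`. -/
noncomputable def rootSum (n X : ℕ) : ℝ := ∑ A ∈ Finset.Ioc 0 X, (formRootCount n A : ℝ)

/-- The error term in the asymptotics of `rootSum`, up to a factor `√n`. -/
noncomputable def rootErr (n : ℕ) : ℝ :=
  3 * ((2 * n).divisors.card : ℝ) ^ 2 * (smoothCount n * maxDivisors n * (1 + Real.log n))

lemma isSubpoly_rootErr : IsSubpoly rootErr := by
  have hdiv : IsSubpoly fun n => ((2 * n).divisors.card : ℝ) := by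
    simpa only [pow_one] using isSubpoly_card_divisors_mul_pow two_pos one_pos
  refine fun ε hε => ((((IsSubpoly.const 3).mul (hdiv.mul hdiv)).mul
    ((isSubpoly_smoothCount.mul isSubpoly_maxDivisors).mul isSubpoly_one_add_log)) ε
    hε).congr_left fun n => ?_
  rw [rootErr, pow_two]

/-- The factor by which `formRootFun n` differs from the convolution of the restrictions of the zeta
function and of the quadratic character modulo `4` to the integers coprime to `2 * n`. -/
noncomputable def rootWeight (n : ℕ) : ArithmeticFunction ℝ :=
  smoothPart (2 * n) (formRootFun n) * coprimePart (2 * n) squareMoebius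

lemma sum_rootWeight_div_sqrt_le (n : ℕ) :
    ∑ k ∈ Finset.Ioc 0 n, |rootWeight n k| / √k ≤
      smoothCount n * maxDivisors n * (1 + Real.log n) :=
  (sum_abs_mul_div_sqrt_le _ _ n).trans
    (mul_le_mul (sum_smoothPart_div_sqrt_le n) (sum_squareMoebius_div_sqrt_le (2 * n) n)
      (Finset.sum_nonneg fun _ _ => by positivity) (by positivity))

lemma rootSum_eq_sum_rootWeight {n X : ℕ} (hn : n ≠ 0) (hX : X ≤ n) :
    rootSum n X = ∑ k ∈ Finset.Ioc 0 n, rootWeight n k * ∑ m ∈ Finset.Ioc 0 (X / k),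
      (coprimePart (2 * n) (ArithmeticFunction.zeta : ArithmeticFunction ℝ) *
        coprimePart (2 * n) chiFour) m := by
  have hfactor : formRootFun n = rootWeight n *
      (coprimePart (2 * n) (ArithmeticFunction.zeta : ArithmeticFunction ℝ) *
        coprimePart (2 * n) chiFour) := by
    rw [rootWeight, mul_assoc, ← coprimePart_formRootFun dvd_rfl,
      smoothPart_mul_coprimePart (isMultiplicative_formRootFun n) (by omega)]
  calc rootSum n X = ∑ A ∈ Finset.Ioc 0 X, formRootFun n A := rfl
    _ = _ := by rw [hfactor, ArithmeticFunction.sum_Ioc_mul_eq_sum_sum]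
    _ = _ := by
        refine Finset.sum_subset (Finset.Ioc_subset_Ioc_right hX) fun k hk hkX => ?_
        rw [Finset.mem_Ioc] at hk hkX
        rw [Nat.div_eq_of_lt (by omega), Finset.Ioc_self, Finset.sum_empty, mul_zero]

lemma exists_abs_rootSum_sub_le {n : ℕ} (hn : n ≠ 0) :
    ∃ c : ℝ, ∀ X ≤ n, |rootSum n X - c * X| ≤ rootErr n * √n := by
  refine ⟨meanCoeff (2 * n) n * ∑ k ∈ Finset.Ioc 0 n, rootWeight n k / k, fun X hX => ?_⟩
  set τ := ((2 * n).divisors.card : ℝ) with hτ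
  have hXn : (X : ℝ) ≤ n := by exact_mod_cast hX
  have hterm : ∀ k ∈ Finset.Ioc 0 n, |rootWeight n k * ∑ m ∈ Finset.Ioc 0 (X / k),
      (coprimePart (2 * n) (ArithmeticFunction.zeta : ArithmeticFunction ℝ) *
        coprimePart (2 * n) chiFour) m - meanCoeff (2 * n) n * (rootWeight n k / k * X)| ≤
      |rootWeight n k| / √k * (3 * τ ^ 2 * √n) := by
    intro k _
    have hfloor : ⌊(X : ℝ) / k⌋₊ = X / k := Nat.floor_div_eq_div X k
    have hmean := abs_sum_sub_meanCoeff_mul_le (N := 2 * n) (by omega)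
      (by positivity : (0 : ℝ) ≤ X / k) (hfloor.trans_le ((Nat.div_le_self X k).trans hX))
    rw [hfloor] at hmean
    rw [div_mul_eq_mul_div, mul_div_assoc, mul_left_comm, ← mul_sub, abs_mul]
    calc _ ≤ |rootWeight n k| * (3 * τ ^ 2 * √(X / k)) :=
          mul_le_mul_of_nonneg_left hmean (abs_nonneg _)
      _ ≤ |rootWeight n k| * (3 * τ ^ 2 * √(n / k)) := by gcongr
      _ = _ := by rw [Real.sqrt_div (Nat.cast_nonneg n)]; ring
  rw [rootSum_eq_sum_rootWeight hn hX, mul_assoc, Finset.sum_mul, Finset.mul_sum,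
    ← Finset.sum_sub_distrib]
  calc _ ≤ (∑ k ∈ Finset.Ioc 0 n, |rootWeight n k| / √k) * (3 * τ ^ 2 * √n) := by
        rw [Finset.sum_mul]
        exact (Finset.abs_sum_le_sum_abs _ _).trans (Finset.sum_le_sum hterm)
    _ ≤ smoothCount n * maxDivisors n * (1 + Real.log n) * (3 * τ ^ 2 * √n) := by
        gcongr
        exact sum_rootWeight_div_sqrt_le n
    _ = rootErr n * √n := by rw [rootErr, hτ]; ring

lemma coprimePart_formRootFun_nonneg (N n A : ℕ) : 0 ≤ coprimePart N (formRootFun n) A := by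
  rw [coprimePart_apply, formRootFun_apply]
  positivity

lemma coprimePart_formRootFun_le (N n A : ℕ) :
    coprimePart N (formRootFun n) A ≤ formRootFun n A := by
  rw [coprimePart_apply, formRootFun_apply]
  split_ifs
  · exact le_rfl
  · positivity

lemma sum_formRootFun_one_le {n : ℕ} (hn : n ≠ 0) :
    ∑ A ∈ Finset.Ioc 0 n, formRootFun 1 A ≤
      smoothCount n * (2 * maxDivisors n) * rootSum n n := by
  -- Away from `2 * n` the root counting functions of `1` and `n` agree.
  have hcop : coprimePart (2 * n) (formRootFun 1) = coprimePart (2 * n) (formRootFun n) := by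
    rw [coprimePart_formRootFun dvd_rfl, coprimePart_formRootFun (by omega)]
  rw [← smoothPart_mul_coprimePart (isMultiplicative_formRootFun 1) (by omega : 2 * n ≠ 0),
    ArithmeticFunction.sum_Ioc_mul_eq_sum_sum, hcop, smoothCount, ← nsmul_eq_mul,
    ← Finset.sum_const, Finset.sum_mul, Finset.sum_filter]
  refine Finset.sum_le_sum fun m hm => ?_
  rw [Finset.mem_Ioc] at hm
  rw [smoothPart_apply, formRootFun_apply]
  split_ifs
  · have hcount : formRootCount 1 m ≤ 2 * maxDivisors n := by
      linarith [formRootCount_one_le (A := m) (by omega), card_divisors_le_maxDivisors hm.1 hm.2]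
    have hsum : ∑ A ∈ Finset.Ioc 0 (n / m), coprimePart (2 * n) (formRootFun n) A ≤ rootSum n n :=
      (Finset.sum_le_sum_of_subset_of_nonneg
        (Finset.Ioc_subset_Ioc_right (Nat.div_le_self n m))
        fun A _ _ => coprimePart_formRootFun_nonneg _ n A).trans
        (Finset.sum_le_sum fun A _ => coprimePart_formRootFun_le _ n A)
    exact mul_le_mul (by exact_mod_cast hcount) hsum
      (Finset.sum_nonneg fun A _ => coprimePart_formRootFun_nonneg _ n A) (by positivity)
  · rw [zero_mul]

lemma le_mul_rootSum {n : ℕ} (hn : 2 ≤ n) :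
    (n : ℝ) ≤ 64 * smoothCount n * maxDivisors n * rootSum n n := by
  have hone : (n : ℝ) ≤ 32 * ∑ A ∈ Finset.Ioc 0 n, formRootFun 1 A := by
    simp only [formRootFun_apply]
    exact_mod_cast le_sum_formRootCount_one hn
  linarith [sum_formRootFun_one_le (by omega : n ≠ 0)]

/-! ### Roots up to sign -/

lemma IsFormRoot.sub {n A H : ℕ} (h : IsFormRoot n A H) (hHA : H ≤ A) : IsFormRoot n A (A - H) := by
  obtain ⟨K, rfl⟩ := Nat.exists_eq_add_of_le hHA
  rw [Nat.add_sub_cancel_left]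
  rw [isFormRoot_iff_forall_prime] at h ⊢
  obtain ⟨hdvd, hprime⟩ := h
  have hsq : K ^ 2 + n ^ 2 + 2 * H * (H + K) = H ^ 2 + n ^ 2 + (H + K) * (H + K) := by ring
  refine ⟨?_, fun p hp hpA hpK hpmul => ?_⟩
  · rw [← Nat.dvd_add_left (Dvd.intro_left (2 * H) rfl), hsq]
    exact hdvd.add (Dvd.intro _ rfl)
  · have hpH : p ∣ 2 * H :=
      (Nat.dvd_add_left hpK).mp ((Nat.mul_add 2 H K) ▸ hpA.mul_left 2)
    refine hprime p hp hpA hpH ?_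
    rw [← Nat.dvd_add_left (mul_dvd_mul_right hpA (H + K)), ← hsq]
    exact hpmul.add (mul_dvd_mul_right hpH _)

open Classical in
/-- The residues counted by `formRootCount`, up to sign. -/
noncomputable def halfRoots (n A : ℕ) : Finset ℕ :=
  (Finset.range (A / 2 + 1)).filter fun H => IsFormRoot n A H

section HalfRoots

variable {n A H : ℕ}

lemma mem_halfRoots : H ∈ halfRoots n A ↔ 2 * H ≤ A ∧ IsFormRoot n A H := by
  rw [halfRoots, Finset.mem_filter, Finset.mem_range]
  exact and_congr_left fun _ => by omega

lemma formRootCount_le_two_mul_card_halfRoots (n A : ℕ) :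
    formRootCount n A ≤ 2 * (halfRoots n A).card := by
  rw [formRootCount, two_mul]
  refine (Finset.card_le_card (t := halfRoots n A ∪ (halfRoots n A).image (A - ·))
    fun H hH => ?_).trans ((Finset.card_union_le _ _).trans
      (Nat.add_le_add_left Finset.card_image_le _))
  rw [Finset.mem_filter, Finset.mem_range] at hH
  rw [Finset.mem_union, Finset.mem_image]
  rcases Nat.lt_or_ge A (2 * H) with hlt | hge
  · exact .inr ⟨A - H, mem_halfRoots.mpr ⟨by omega, hH.2.sub hH.1.le⟩, by omega⟩
  · exact .inl (mem_halfRoots.mpr ⟨hge, hH.2⟩)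

lemma card_halfRoots_add_card_filter_le (hA : A ≠ 0) :
    (halfRoots n A).card + ((halfRoots n A).filter fun H => 0 < H ∧ 2 * H < A).card ≤
      formRootCount n A := by
  set interior := (halfRoots n A).filter fun H => 0 < H ∧ 2 * H < A
  have hmem : ∀ {H}, H ∈ interior ↔ (2 * H ≤ A ∧ IsFormRoot n A H) ∧ 0 < H ∧ 2 * H < A :=
    Finset.mem_filter.trans (and_congr_left fun _ => mem_halfRoots)
  have hinj : Set.InjOn (A - ·) (interior : Set ℕ) := by
    intro a ha b hb hab
    have ha' := hmem.mp ha
    have hb' := hmem.mp hb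
    simp only at hab
    omega
  have hdisj : Disjoint (halfRoots n A) (interior.image (A - ·)) := by
    rw [Finset.disjoint_left]
    intro H hH hH'
    obtain ⟨K, hK, rfl⟩ := Finset.mem_image.mp hH'
    have hK' := hmem.mp hK
    have hH'' := mem_halfRoots.mp hH
    omega
  rw [← Finset.card_image_of_injOn hinj, ← Finset.card_union_of_disjoint hdisj, formRootCount]
  refine Finset.card_le_card fun H hH => ?_
  rw [Finset.mem_filter, Finset.mem_range]
  rcases Finset.mem_union.mp hH with hH | hH
  · obtain ⟨hle, hroot⟩ := mem_halfRoots.mp hH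
    exact ⟨by omega, hroot⟩
  · obtain ⟨K, hK, rfl⟩ := Finset.mem_image.mp hH
    obtain ⟨⟨hle, hroot⟩, hpos, -⟩ := hmem.mp hK
    exact ⟨by omega, hroot.sub (by omega)⟩

lemma card_halfRoots_le (n A : ℕ) :
    (halfRoots n A).card ≤ ((halfRoots n A).filter fun H => 0 < H ∧ 2 * H < A).card +
      if A ∣ 4 * n ^ 2 then 2 else 0 := by
  have hboundary : halfRoots n A ⊆ ((halfRoots n A).filter fun H => 0 < H ∧ 2 * H < A) ∪
      if A ∣ 4 * n ^ 2 then {0, A / 2} else ∅ := by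
    intro H hH
    rw [Finset.mem_union]
    by_cases hint : 0 < H ∧ 2 * H < A
    · exact .inl (Finset.mem_filter.mpr ⟨hH, hint⟩)
    right
    obtain ⟨hle, hroot⟩ := mem_halfRoots.mp hH
    have hdvdH : A ∣ 4 * H ^ 2 := by
      rcases (by omega : H = 0 ∨ 2 * H = A) with rfl | hHA
      · exact dvd_zero A
      · exact ⟨A, by rw [← hHA]; ring⟩
    have hdvd : A ∣ 4 * n ^ 2 := by
      rw [← Nat.dvd_add_right hdvdH, ← mul_add]
      exact hroot.1.mul_left 4
    rw [if_pos hdvd, Finset.mem_insert, Finset.mem_singleton]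
    omega
  refine (Finset.card_le_card hboundary).trans ((Finset.card_union_le _ _).trans ?_)
  gcongr
  split_ifs
  · exact Finset.card_le_two
  · exact Finset.card_empty.le

lemma two_mul_card_halfRoots_le (hA : A ≠ 0) :
    2 * (halfRoots n A).card ≤ formRootCount n A + if A ∣ 4 * n ^ 2 then 2 else 0 := by
  linarith [card_halfRoots_add_card_filter_le (n := n) hA, card_halfRoots_le n A]

lemma abs_two_mul_sum_card_halfRoots_sub_le (hn : n ≠ 0) (s : Finset ℕ) (hs : 0 ∉ s) :
    |2 * ∑ A ∈ s, ((halfRoots n A).card : ℝ) - ∑ A ∈ s, (formRootCount n A : ℝ)| ≤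
      2 * (4 * n ^ 2).divisors.card := by
  rw [Finset.mul_sum, ← Finset.sum_sub_distrib]
  refine (Finset.abs_sum_le_sum_abs _ _).trans ?_
  calc ∑ A ∈ s, |2 * ((halfRoots n A).card : ℝ) - formRootCount n A|
      ≤ ∑ A ∈ s, if A ∣ 4 * n ^ 2 then (2 : ℝ) else 0 := by
        refine Finset.sum_le_sum fun A hA => ?_
        have hlower : (formRootCount n A : ℝ) ≤ 2 * (halfRoots n A).card := by
          exact_mod_cast formRootCount_le_two_mul_card_halfRoots n A
        have hupper : 2 * ((halfRoots n A).card : ℝ) ≤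
            formRootCount n A + if A ∣ 4 * n ^ 2 then 2 else 0 := by
          exact_mod_cast two_mul_card_halfRoots_le (n := n) fun h => hs (h ▸ hA)
        rw [abs_of_nonneg (sub_nonneg.mpr hlower)]
        exact sub_le_iff_le_add'.mpr hupper
    _ = 2 * ((s.filter fun A => A ∣ 4 * n ^ 2).card : ℝ) := by
        rw [← Finset.sum_filter, Finset.sum_const, nsmul_eq_mul, mul_comm]
    _ ≤ _ := by
        gcongr
        intro A hA
        exact Nat.mem_divisors.mpr ⟨(Finset.mem_filter.mp hA).2, by positivity⟩

end HalfRoots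

/-! ### Equidistribution of the leading coefficients -/

section Comparison

variable {s n m c Fn Fm P T d E L : ℝ}

lemma abs_slope_le (hn : 1 ≤ n) (hFn0 : 0 ≤ Fn) (hFn : |Fn - c * n| ≤ E) (hT : |2 * T - Fn| ≤ d) :
    |c| ≤ d + E + 2 * T / n := by
  have hd : 0 ≤ d := (abs_nonneg _).trans hT
  have hE : 0 ≤ E := (abs_nonneg _).trans hFn
  have hn0 : 0 < n := by linarith
  have hcn : |c| * n ≤ 2 * T + d + E := by
    rw [show |c| * n = |c * n| by rw [abs_mul, abs_of_pos hn0]]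
    rw [abs_le] at hFn hT ⊢
    constructor <;> linarith
  refine le_of_mul_le_mul_right (hcn.trans ?_) hn0
  rw [add_mul, div_mul_cancel₀ _ hn0.ne']
  linarith [le_mul_of_one_le_right (add_nonneg hd hE) hn]

-- If `F` is nearly linear on `[0, n]`, then its increment `P` beyond `m ≈ (1 - s) n` is nearly
-- `s` times its total `T`; the factors `2` come from passing to roots up to sign.
lemma abs_two_mul_sub_le (hs0 : 0 ≤ s) (hs1 : s ≤ 1) (hn : 1 ≤ n)
    (hmle : m ≤ (1 - s) * n) (hlem : (1 - s) * n ≤ m + 1) (hFn0 : 0 ≤ Fn)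
    (hFn : |Fn - c * n| ≤ E) (hFm : |Fm - c * m| ≤ E) (hT : |2 * T - Fn| ≤ d)
    (hP : |2 * P - (Fn - Fm)| ≤ d) :
    |2 * P - s * (2 * T)| ≤ 3 * d + 3 * E + 2 * T / n := by
  have hTs : |s * (2 * T - Fn)| ≤ d := by
    rw [abs_mul, abs_of_nonneg hs0]
    exact (mul_le_of_le_one_left (abs_nonneg _) hs1).trans hT
  have hFs : |(1 - s) * (Fn - c * n)| ≤ E := by
    rw [abs_mul, abs_of_nonneg (by linarith : 0 ≤ 1 - s)]
    exact (mul_le_of_le_one_left (abs_nonneg _) (by linarith)).trans hFn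
  have hround : |c * ((1 - s) * n - m)| ≤ d + E + 2 * T / n := by
    rw [abs_mul]
    exact (mul_le_of_le_one_right (abs_nonneg _)
      (abs_le.mpr ⟨by linarith, by linarith⟩)).trans (abs_slope_le hn hFn0 hFn hT)
  have hdecomp : 2 * P - s * (2 * T) = (2 * P - (Fn - Fm)) - s * (2 * T - Fn)
      + (1 - s) * (Fn - c * n) - (Fm - c * m) + c * ((1 - s) * n - m) := by ring
  rw [hdecomp]
  rw [abs_le] at hP hTs hFs hround hFm ⊢
  constructor <;> linarith

lemma abs_div_sub_le (hn : 0 < n) (hL : 0 ≤ L) (hd : 0 ≤ d) (hnT : n ≤ L * (2 * T))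
    (h : |2 * P - s * (2 * T)| ≤ d + 2 * T / n) : |P / T - s| ≤ d * L / n + 1 / n := by
  have hT : 0 < 2 * T := pos_of_mul_pos_right (hn.trans_le hnT) hL
  have hT' : T ≠ 0 := by linarith
  calc |P / T - s| = |2 * P - s * (2 * T)| / (2 * T) := by
        rw [← abs_of_pos hT, ← abs_div, abs_of_pos hT]
        congr 1
        field_simp
    _ ≤ (d + 2 * T / n) / (2 * T) := by gcongr
    _ = d * (1 / (2 * T)) + 1 / n := by field_simp
    _ ≤ d * (L / n) + 1 / n := by
        refine add_le_add_left (mul_le_mul_of_nonneg_left ?_ hd) _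
        rw [div_le_div_iff₀ hT hn, one_mul]
        exact hnT
    _ = d * L / n + 1 / n := by rw [mul_div_assoc]

end Comparison

lemma exists_filter_Ioc_eq_Ioc {s : ℝ} (hs0 : 0 ≤ s) (hs1 : s ≤ 1) (n : ℕ) :
    ∃ m : ℕ, m ≤ n ∧ (m : ℝ) ≤ (1 - s) * n ∧ (1 - s) * n ≤ m + 1 ∧
      (Finset.Ioc 0 n).filter (fun A : ℕ => (n : ℝ) - A ≤ s * n) = Finset.Ioc m n := by
  have hx : 0 ≤ (1 - s) * (n : ℝ) := mul_nonneg (sub_nonneg.mpr hs1) (Nat.cast_nonneg n)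
  have hceil : ⌈(1 - s) * (n : ℝ)⌉₊ ≤ n :=
    Nat.ceil_le.mpr (mul_le_of_le_one_left (Nat.cast_nonneg n) (sub_le_self 1 hs0))
  refine ⟨⌈(1 - s) * n⌉₊ - 1, by omega, ?_, ?_, ?_⟩
  · rcases Nat.eq_zero_or_pos ⌈(1 - s) * (n : ℝ)⌉₊ with hzero | hpos
    · simpa only [hzero, Nat.zero_sub, Nat.cast_zero] using hx
    · rw [Nat.cast_sub hpos, Nat.cast_one]
      linarith [Nat.ceil_lt_add_one hx]
  · refine (Nat.le_ceil _).trans ?_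
    exact_mod_cast (by omega : ⌈(1 - s) * (n : ℝ)⌉₊ ≤ ⌈(1 - s) * (n : ℝ)⌉₊ - 1 + 1)
  · ext A
    have hA : (n : ℝ) - A ≤ s * n ↔ ⌈(1 - s) * (n : ℝ)⌉₊ ≤ A := by
      rw [Nat.ceil_le, sub_mul, one_mul, sub_le_comm]
    rw [Finset.mem_filter, Finset.mem_Ioc, Finset.mem_Ioc, hA]
    omega

lemma rootSum_nonneg (n X : ℕ) : 0 ≤ rootSum n X := Finset.sum_nonneg fun _ _ => Nat.cast_nonneg _

lemma rootErr_nonneg (n : ℕ) : 0 ≤ rootErr n :=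
  mul_nonneg (by positivity)
    (mul_nonneg (by positivity) (add_nonneg zero_le_one (Real.log_natCast_nonneg n)))

lemma le_mul_sum_card_halfRoots {n : ℕ} (hn : 2 ≤ n) :
    (n : ℝ) ≤ 64 * smoothCount n * maxDivisors n *
      (2 * ∑ A ∈ Finset.Ioc 0 n, ((halfRoots n A).card : ℝ)) := by
  refine (le_mul_rootSum hn).trans (mul_le_mul_of_nonneg_left ?_ (by positivity))
  rw [Finset.mul_sum]
  exact Finset.sum_le_sum fun A _ => by
    exact_mod_cast formRootCount_le_two_mul_card_halfRoots n A

lemma abs_sum_card_halfRoots_div_sub_le {s : ℝ} (hs0 : 0 ≤ s) (hs1 : s ≤ 1) {n : ℕ} (hn : 2 ≤ n) :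
    |(∑ A ∈ (Finset.Ioc 0 n).filter (fun A : ℕ => (n : ℝ) - A ≤ s * n),
        ((halfRoots n A).card : ℝ)) / ∑ A ∈ Finset.Ioc 0 n, ((halfRoots n A).card : ℝ) - s| ≤
      (3 * (2 * (4 * n ^ 2).divisors.card) + 3 * (rootErr n * √n)) *
        (64 * smoothCount n * maxDivisors n) / n + 1 / n := by
  have hn0 : n ≠ 0 := by omega
  obtain ⟨c, hc⟩ := exists_abs_rootSum_sub_le hn0
  obtain ⟨m, hmn, hmle, hlem, hfilter⟩ := exists_filter_Ioc_eq_Ioc hs0 hs1 n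
  have hT := abs_two_mul_sum_card_halfRoots_sub_le hn0 (Finset.Ioc 0 n) (by simp)
  have hP := abs_two_mul_sum_card_halfRoots_sub_le hn0 (Finset.Ioc m n) (by simp)
  have hsplit : ∑ A ∈ Finset.Ioc m n, (formRootCount n A : ℝ) = rootSum n n - rootSum n m := by
    rw [eq_sub_iff_add_eq, rootSum, rootSum, add_comm]
    exact Finset.sum_Ioc_consecutive _ (Nat.zero_le m) hmn
  rw [hsplit] at hP
  rw [hfilter]
  have hErr := rootErr_nonneg n
  exact abs_div_sub_le (by positivity) (by positivity) (by positivity)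
    (le_mul_sum_card_halfRoots hn)
    (abs_two_mul_sub_le hs0 hs1 (by exact_mod_cast (by omega : 1 ≤ n)) hmle hlem
      (rootSum_nonneg n n) (hc n le_rfl) (hc m hmn) hT hP)

lemma tendsto_sum_card_halfRoots_div {s : ℝ} (hs0 : 0 ≤ s) (hs1 : s ≤ 1) :
    Filter.Tendsto (fun n : ℕ =>
      (∑ A ∈ (Finset.Ioc 0 n).filter (fun A : ℕ => (n : ℝ) - A ≤ s * n),
        ((halfRoots n A).card : ℝ)) / ∑ A ∈ Finset.Ioc 0 n, ((halfRoots n A).card : ℝ))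
      Filter.atTop (nhds s) := by
  have hL : IsSubpoly fun n => 64 * smoothCount n * maxDivisors n :=
    ((IsSubpoly.const 64).mul isSubpoly_smoothCount).mul isSubpoly_maxDivisors
  have hlim := (((((IsSubpoly.const 3).mul ((IsSubpoly.const 2).mul
    (isSubpoly_card_divisors_mul_pow four_pos two_pos))).mul hL).tendsto_div one_pos).add
    ((((IsSubpoly.const 3).mul isSubpoly_rootErr).mul hL).tendsto_div one_half_pos)).add
    ((IsSubpoly.const 1).tendsto_div one_pos)
  rw [add_zero, add_zero] at hlim
  rw [tendsto_iff_norm_sub_tendsto_zero]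
  refine squeeze_zero' (.of_forall fun _ => norm_nonneg _) ?_ hlim
  filter_upwards [Filter.eventually_ge_atTop 2] with n hn
  refine (abs_sum_card_halfRoots_div_sub_le hs0 hs1 hn).trans_eq ?_
  have hsqrt : (0 : ℝ) < √n := Real.sqrt_pos.mpr (by positivity)
  have hn' : (n : ℝ) = √n * √n := (Real.mul_self_sqrt (Nat.cast_nonneg n)).symm
  rw [Real.rpow_one, ← Real.sqrt_eq_rpow, add_mul, add_div]
  congr 2
  rw [div_eq_div_iff (by positivity) hsqrt.ne']
  nth_rewrite 3 [hn']
  ring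

/-! ### Orbits of Descartes quadruples and binary quadratic forms -/

lemma gcd_four_eq_one_iff (a b c d : ℤ) :
    Int.gcd (Int.gcd (Int.gcd a b : ℤ) c : ℤ) d = 1 ↔
      ∀ p : ℕ, p.Prime → ¬ ((p : ℤ) ∣ a ∧ (p : ℤ) ∣ b ∧ (p : ℤ) ∣ c ∧ (p : ℤ) ∣ d) := by
  rw [Nat.eq_one_iff_not_exists_prime_dvd]
  refine forall_congr' fun p => imp_congr_right fun _ => not_congr ?_
  rw [← Int.natCast_dvd_natCast, Int.dvd_coe_gcd_iff, Int.dvd_coe_gcd_iff, Int.dvd_coe_gcd_iff,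
    and_assoc, and_assoc]

lemma S₄_mulVec (q : Fin 4 → ℤ) :
    S₄ *ᵥ q = ![q 0, q 1, q 2, 2 * (q 0 + q 1 + q 2) - q 3] := by
  ext i
  fin_cases i <;> simp [S₄, mulVec, dotProduct, Fin.sum_univ_four]
  ring

lemma P₂₃_mulVec (q : Fin 4 → ℤ) : P₂₃ *ᵥ q = ![q 0, q 2, q 1, q 3] := by
  ext i
  fin_cases i <;> simp [P₂₃, mulVec, dotProduct, Fin.sum_univ_four]

lemma P₂₄_mulVec (q : Fin 4 → ℤ) : P₂₄ *ᵥ q = ![q 0, q 3, q 2, q 1] := by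
  ext i
  fin_cases i <;> simp [P₂₄, mulVec, dotProduct, Fin.sum_univ_four]

lemma S₄_mul_self : S₄ * S₄ = 1 := by decide

lemma P₂₃_mul_self : P₂₃ * P₂₃ = 1 := by decide

lemma P₂₄_mul_self : P₂₄ * P₂₄ = 1 := by decide

lemma S₄_mem_Ap₁ : S₄ ∈ Ap₁ := Submonoid.subset_closure (by simp)

lemma P₂₃_mem_Ap₁ : P₂₃ ∈ Ap₁ := Submonoid.subset_closure (by simp)

lemma P₂₄_mem_Ap₁ : P₂₄ ∈ Ap₁ := Submonoid.subset_closure (by simp)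

lemma Ap₁_mulVec_induction {p : (Fin 4 → ℤ) → Prop} (hS₄ : ∀ q, p q → p (S₄ *ᵥ q))
    (hP₂₃ : ∀ q, p q → p (P₂₃ *ᵥ q)) (hP₂₄ : ∀ q, p q → p (P₂₄ *ᵥ q))
    {M : Matrix (Fin 4) (Fin 4) ℤ} (hM : M ∈ Ap₁) : ∀ q, p q → p (M *ᵥ q) := by
  induction hM using Submonoid.closure_induction with
  | mem M hM =>
    rcases hM with rfl | rfl | rfl
    · exact hP₂₃
    · exact hP₂₄
    · exact hS₄
  | one => simp only [one_mulVec, imp_self, implies_true]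
  | mul M N _ _ hM hN =>
    intro q hq
    rw [← mulVec_mulVec]
    exact hM _ (hN _ hq)

lemma exists_mul_eq_one_of_mem_Ap₁ {M : Matrix (Fin 4) (Fin 4) ℤ} (hM : M ∈ Ap₁) :
    ∃ N ∈ Ap₁, N * M = 1 := by
  induction hM using Submonoid.closure_induction with
  | mem M hM =>
    refine ⟨M, Submonoid.subset_closure hM, ?_⟩
    rcases hM with rfl | rfl | rfl
    · exact P₂₃_mul_self
    · exact P₂₄_mul_self
    · exact S₄_mul_self
  | one => exact ⟨1, one_mem _, one_mul _⟩
  | mul M N _ _ hM hN =>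
    obtain ⟨M', hM', hMM⟩ := hM
    obtain ⟨N', hN', hNN⟩ := hN
    refine ⟨N' * M', mul_mem hN' hM', ?_⟩
    rw [mul_assoc, ← mul_assoc M', hMM, one_mul, hNN]

/-- The relation of lying in the same `Ap₁`-orbit. -/
def Ap₁Rel (q q' : Fin 4 → ℤ) : Prop := ∃ M ∈ Ap₁, q' = M *ᵥ q

namespace Ap₁Rel

variable {q q' q'' : Fin 4 → ℤ}

lemma refl (q : Fin 4 → ℤ) : Ap₁Rel q q := ⟨1, one_mem _, (one_mulVec q).symm⟩

lemma symm (h : Ap₁Rel q q') : Ap₁Rel q' q := by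
  obtain ⟨M, hM, rfl⟩ := h
  obtain ⟨N, hN, hNM⟩ := exists_mul_eq_one_of_mem_Ap₁ hM
  exact ⟨N, hN, by rw [mulVec_mulVec, hNM, one_mulVec]⟩

lemma trans (h : Ap₁Rel q q') (h' : Ap₁Rel q' q'') : Ap₁Rel q q'' := by
  obtain ⟨M, hM, rfl⟩ := h
  obtain ⟨N, hN, rfl⟩ := h'
  exact ⟨N * M, mul_mem hN hM, mulVec_mulVec _ _ _⟩

lemma setOf_eq (h : Ap₁Rel q q') :
    {x | ∃ M ∈ Ap₁, x = M *ᵥ q} = {x | ∃ M ∈ Ap₁, x = M *ᵥ q'} :=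
  Set.ext fun _ => ⟨h.symm.trans, h.trans⟩

end Ap₁Rel

lemma descartes_add_nonneg {n a b c : ℤ}
    (h : (n + a + b + c) ^ 2 = 2 * (n ^ 2 + a ^ 2 + b ^ 2 + c ^ 2))
    (ha : 0 ≤ n + a) (hb : 0 ≤ n + b) : 0 ≤ n + c := by
  by_contra! hc
  nlinarith [mul_nonneg ha (neg_nonneg.mpr hc.le), mul_nonneg hb (neg_nonneg.mpr hc.le),
    sq_nonneg (a - b), sq_nonneg n, mul_pos_of_neg_of_neg hc hc]

lemma mulVec_mem_DSet {n : ℤ} {M : Matrix (Fin 4) (Fin 4) ℤ} (hM : M ∈ Ap₁) :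
    ∀ q, q ∈ DSet n → M *ᵥ q ∈ DSet n := by
  simp only [DSet, gcd_four_eq_one_iff, Set.mem_ofPred_eq]
  refine Ap₁_mulVec_induction ?_ ?_ ?_ hM
  · rintro q ⟨hn, hgcd, hdesc, h₁, h₂⟩
    simp only [S₄_mulVec, cons_val]
    refine ⟨hn, fun p hp ⟨hp₀, hp₁, hp₂, hp₃⟩ => hgcd p hp ⟨hp₀, hp₁, hp₂, ?_⟩, by linarith, h₁, h₂⟩
    exact (dvd_sub_right (((hp₀.add hp₁).add hp₂).mul_left 2)).mp hp₃
  · rintro q ⟨hn, hgcd, hdesc, h₁, h₂⟩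
    simp only [P₂₃_mulVec, cons_val]
    exact ⟨hn, fun p hp ⟨hp₀, hp₂, hp₁, hp₃⟩ => hgcd p hp ⟨hp₀, hp₁, hp₂, hp₃⟩,
      by linarith, h₂, h₁⟩
  · rintro q ⟨hn, hgcd, hdesc, h₁, h₂⟩
    simp only [P₂₄_mulVec, cons_val]
    exact ⟨hn, fun p hp ⟨hp₀, hp₃, hp₂, hp₁⟩ => hgcd p hp ⟨hp₀, hp₁, hp₂, hp₃⟩,
      by linarith, descartes_add_nonneg hdesc h₁ h₂, h₂⟩

/-- The Descartes quadruple attached to the form `A x² + 2 H x y + B y²`, where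
`A B = H² + n²`: its last three entries, shifted by `n`, are the values of the form at
`(1, 0)`, `(0, 1)` and `(1, -1)`. -/
def rootQuad (n A H : ℤ) : Fin 4 → ℤ :=
  ![n, A - n, (H ^ 2 + n ^ 2) / A - n, A + (H ^ 2 + n ^ 2) / A - 2 * H - n]

lemma rootQuad_eq {n A B H : ℤ} (hA : A ≠ 0) (h : A * B = H ^ 2 + n ^ 2) :
    rootQuad n A H = ![n, A - n, B - n, A + B - 2 * H - n] := by
  rw [rootQuad, ← h, Int.mul_ediv_cancel_left _ hA]

lemma exists_eq_rootQuad {n : ℤ} (hn : 0 < n) {q : Fin 4 → ℤ} (hq : q ∈ DSet n) :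
    ∃ H : ℤ, 0 < n + q 1 ∧ (n + q 1) ∣ H ^ 2 + n ^ 2 ∧ q = rootQuad n (n + q 1) H := by
  obtain ⟨hq₀, -, hdesc, h₁, -⟩ := hq
  rw [hq₀] at hdesc h₁
  obtain ⟨H, hH⟩ : Even (n + q 1 + q 2 - q 3) := by
    have hsq : Even ((n + q 1 + q 2 + q 3) ^ 2) := ⟨_, hdesc.trans (two_mul _)⟩
    have hsum : Even (n + q 1 + q 2 + q 3) := (Int.even_pow' two_ne_zero).mp hsq
    rw [show n + q 1 + q 2 - q 3 = (n + q 1 + q 2 + q 3) - (q 3 + q 3) by ring]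
    exact hsum.sub ⟨_, rfl⟩
  have hAB : (n + q 1) * (n + q 2) = H ^ 2 + n ^ 2 := by
    rw [show q 3 = n + q 1 + q 2 - 2 * H by linarith] at hdesc
    linarith
  have hpos : 0 < n + q 1 := by
    refine lt_of_le_of_ne h₁ fun h => ?_
    rw [← h] at hAB
    nlinarith [sq_nonneg H]
  refine ⟨H, hpos, ⟨_, hAB.symm⟩, ?_⟩
  rw [rootQuad_eq hpos.ne' hAB]
  ext i
  fin_cases i <;> simp [hq₀]
  linarith

lemma four_dvd_sq_add_sq_iff {a b : ℕ} : 4 ∣ a ^ 2 + b ^ 2 ↔ 2 ∣ a ∧ 2 ∣ b := by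
  constructor
  · intro h
    have hmod : ∀ x y : ZMod 4, x ^ 2 + y ^ 2 = 0 → 2 * x = 0 ∧ 2 * y = 0 := by decide
    have hzmod := hmod a b (by exact_mod_cast (ZMod.natCast_eq_zero_iff _ _).mpr h)
    have half : ∀ x : ℕ, 2 * (x : ZMod 4) = 0 → 2 ∣ x := fun x hx => by
      have : 4 ∣ 2 * x := (ZMod.natCast_eq_zero_iff _ _).mp (by exact_mod_cast hx)
      omega
    exact ⟨half a hzmod.1, half b hzmod.2⟩
  · rintro ⟨ha, hb⟩
    exact dvd_add (pow_dvd_pow_of_dvd ha 2) (pow_dvd_pow_of_dvd hb 2)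

lemma dvd_of_prime_dvd_form {p n A B H : ℕ} (hp : p.Prime) (h : A * B = H ^ 2 + n ^ 2)
    (hA : p ∣ A) (hH : p ∣ 2 * H) (hB : p ∣ B) : p ∣ n := by
  rcases hp.dvd_mul.mp hH with hp2 | hpH
  · obtain rfl := (Nat.prime_dvd_prime_iff_eq hp Nat.prime_two).mp hp2
    exact (four_dvd_sq_add_sq_iff.mp (h ▸ mul_dvd_mul hA hB)).2
  · refine hp.dvd_of_dvd_pow (n := 2) ((Nat.dvd_add_right (hpH.mul_right H)).mp ?_)
    rw [← pow_two, ← h]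
    exact hA.mul_right B

lemma prime_dvd_form_quad_iff {p n A B H : ℕ} (hp : p.Prime) (h : A * B = H ^ 2 + n ^ 2) :
    ((p : ℤ) ∣ n ∧ (p : ℤ) ∣ (A : ℤ) - n ∧ (p : ℤ) ∣ (B : ℤ) - n ∧
      (p : ℤ) ∣ (A : ℤ) + B - 2 * H - n) ↔ p ∣ A ∧ p ∣ 2 * H ∧ p ∣ B := by
  have hcast : p ∣ 2 * H ↔ (p : ℤ) ∣ 2 * H := by exact_mod_cast Int.natCast_dvd_natCast.symm
  constructor
  · rintro ⟨hn, hA, hB, hABH⟩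
    rw [dvd_sub_left hn] at hA hB hABH
    exact ⟨Int.natCast_dvd_natCast.mp hA, hcast.mpr ((dvd_sub_right (hA.add hB)).mp hABH),
      Int.natCast_dvd_natCast.mp hB⟩
  · rintro ⟨hA, hH, hB⟩
    have hn := Int.natCast_dvd_natCast.mpr (dvd_of_prime_dvd_form hp h hA hH hB)
    rw [hcast] at hH
    rw [← Int.natCast_dvd_natCast] at hA hB
    exact ⟨hn, hA.sub hn, hB.sub hn, ((hA.add hB).sub hH).sub hn⟩

lemma rootQuad_mem_DSet_iff {n A H : ℕ} (hA : 0 < A) (hdvd : A ∣ H ^ 2 + n ^ 2) :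
    rootQuad n A H ∈ DSet n ↔ IsFormRoot n A H := by
  obtain ⟨B, hB⟩ := id hdvd
  have hAB : (A : ℤ) * B = (H : ℤ) ^ 2 + (n : ℤ) ^ 2 := by exact_mod_cast hB.symm
  have hprim : (∀ p : ℕ, p.Prime → ¬ ((p : ℤ) ∣ n ∧ (p : ℤ) ∣ (A : ℤ) - n ∧ (p : ℤ) ∣ (B : ℤ) - n ∧
      (p : ℤ) ∣ (A : ℤ) + B - 2 * H - n)) ↔
      ∀ p : ℕ, p.Prime → p ∣ A → p ∣ 2 * H → ¬ p * A ∣ H ^ 2 + n ^ 2 := by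
    refine forall_congr' fun p => imp_congr_right fun hp => ?_
    rw [prime_dvd_form_quad_iff hp hB.symm, hB, mul_comm p A, Nat.mul_dvd_mul_iff_left hA, not_and,
      imp_congr_right fun _ => not_and]
  rw [rootQuad_eq (by exact_mod_cast hA.ne') hAB, DSet, Set.mem_ofPred_eq, gcd_four_eq_one_iff,
    isFormRoot_iff_forall_prime]
  simp only [cons_val]
  rw [hprim]
  exact ⟨fun h => ⟨hdvd, h.2.1⟩, fun h => ⟨trivial, h.2, by linarith, by omega, by omega⟩⟩

lemma ap₁Rel_rootQuad_neg {n A H : ℤ} (hA : A ≠ 0) (h : A ∣ H ^ 2 + n ^ 2) :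
    Ap₁Rel (rootQuad n A H) (rootQuad n A (-H)) := by
  obtain ⟨B, hB⟩ := h
  refine ⟨S₄, S₄_mem_Ap₁, ?_⟩
  rw [rootQuad_eq hA hB.symm, rootQuad_eq (B := B) hA (by rw [← hB]; ring), S₄_mulVec]
  ext i
  fin_cases i <;> simp
  ring

lemma ap₁Rel_rootQuad_sub {n A H : ℤ} (hA : A ≠ 0) (h : A ∣ H ^ 2 + n ^ 2) :
    Ap₁Rel (rootQuad n A H) (rootQuad n A (A - H)) := by
  obtain ⟨B, hB⟩ := h
  refine ⟨P₂₃ * P₂₄ * P₂₃, mul_mem (mul_mem P₂₃_mem_Ap₁ P₂₄_mem_Ap₁) P₂₃_mem_Ap₁, ?_⟩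
  rw [rootQuad_eq hA hB.symm, rootQuad_eq (B := A + B - 2 * H) hA (by linear_combination -hB),
    ← mulVec_mulVec, ← mulVec_mulVec, P₂₃_mulVec, P₂₄_mulVec, P₂₃_mulVec]
  ext i
  fin_cases i <;> simp
  ring

lemma dvd_sq_add_iff_of_modEq {A H H' m : ℤ} (h : H ≡ H' [ZMOD A]) :
    A ∣ H ^ 2 + m ↔ A ∣ H' ^ 2 + m :=
  ((h.pow 2).add_right m).dvd_iff

lemma ap₁Rel_rootQuad_add_mul {n A H : ℤ} (hA : A ≠ 0) (h : A ∣ H ^ 2 + n ^ 2) (k : ℤ) :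
    Ap₁Rel (rootQuad n A H) (rootQuad n A (H + A * k)) := by
  have hdvd : ∀ k : ℤ, A ∣ (H + A * k) ^ 2 + n ^ 2 := fun k =>
    (dvd_sq_add_iff_of_modEq (Int.modEq_iff_dvd.mpr ⟨k, add_sub_cancel_left _ _⟩)).mp h
  have hstep : ∀ k : ℤ,
      Ap₁Rel (rootQuad n A (H + A * k)) (rootQuad n A (H + A * (k + 1))) := by
    intro k
    have hsub := ap₁Rel_rootQuad_sub (n := n) hA (H := -(H + A * k)) (by rw [neg_sq]; exact hdvd k)
    rw [show A - -(H + A * k) = H + A * (k + 1) by ring] at hsub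
    exact (ap₁Rel_rootQuad_neg hA (hdvd k)).trans hsub
  induction k using Int.induction_on with
  | zero => rw [mul_zero, add_zero]; exact .refl _
  | succ k ih => exact ih.trans (hstep k)
  | pred k ih =>
    have hpred := hstep (-k - 1)
    rw [sub_add_cancel] at hpred
    exact ih.trans hpred.symm

lemma exists_ap₁Rel_one_nonpos {q : Fin 4 → ℤ} (hq₀ : 0 < q 0) {i : Fin 4} (hi : q i ≤ 0) :
    ∃ q', Ap₁Rel q q' ∧ q' 1 ≤ 0 := by
  fin_cases i
  · exact absurd hi hq₀.not_ge
  · exact ⟨q, .refl q, hi⟩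
  · exact ⟨_, ⟨P₂₃, P₂₃_mem_Ap₁, rfl⟩, by rw [P₂₃_mulVec]; exact hi⟩
  · exact ⟨_, ⟨P₂₄, P₂₄_mem_Ap₁, rfl⟩, by rw [P₂₄_mulVec]; exact hi⟩

lemma exists_ap₁Rel_rootQuad_two_mul_le {n A H : ℤ} (hA : 0 < A) (h : A ∣ H ^ 2 + n ^ 2) :
    ∃ H', 0 ≤ H' ∧ 2 * H' ≤ A ∧ A ∣ H' ^ 2 + n ^ 2 ∧
      Ap₁Rel (rootQuad n A H) (rootQuad n A H') := by
  have hmod : A ∣ (H % A) ^ 2 + n ^ 2 := (dvd_sq_add_iff_of_modEq (Int.mod_modEq H A)).mpr h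
  have hrel : Ap₁Rel (rootQuad n A H) (rootQuad n A (H % A)) := by
    rw [Int.emod_def, sub_eq_add_neg, ← mul_neg]
    exact ap₁Rel_rootQuad_add_mul hA.ne' h _
  have hnonneg := Int.emod_nonneg H hA.ne'
  have hlt := Int.emod_lt_of_pos H hA
  rcases le_or_gt (2 * (H % A)) A with hle | hgt
  · exact ⟨H % A, hnonneg, hle, hmod, hrel⟩
  · refine ⟨A - H % A, by omega, by omega, ?_, hrel.trans (ap₁Rel_rootQuad_sub hA.ne' hmod)⟩
    rw [← neg_sub, neg_sq]
    exact (dvd_sq_add_iff_of_modEq (Int.sub_modulus_modEq_iff.mpr rfl)).mpr hmod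

lemma exists_ap₁Rel_rootQuad {n : ℤ} (hn : 0 < n) {q : Fin 4 → ℤ} (hq : q ∈ DSet n) {i : Fin 4}
    (hi : q i ≤ 0) :
    ∃ A H : ℕ, 0 < A ∧ (A : ℤ) ≤ n ∧ 2 * H ≤ A ∧ (A : ℤ) ∣ (H : ℤ) ^ 2 + n ^ 2 ∧
      Ap₁Rel q (rootQuad n A H) := by
  obtain ⟨q', hrel, hq'₁⟩ := exists_ap₁Rel_one_nonpos (hq.1.symm ▸ hn) hi
  have hq' : q' ∈ DSet n := by
    obtain ⟨M, hM, rfl⟩ := hrel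
    exact mulVec_mem_DSet hM q hq
  obtain ⟨H, hpos, hdvd, hH⟩ := exists_eq_rootQuad hn hq'
  rw [hH] at hrel
  obtain ⟨H', hH'₀, hH'A, hdvd', hrel'⟩ := exists_ap₁Rel_rootQuad_two_mul_le hpos hdvd
  lift H' to ℕ using hH'₀
  obtain ⟨A, hA⟩ := Int.eq_ofNat_of_zero_le hpos.le
  rw [hA] at hpos hH'A hdvd' hrel hrel'
  exact ⟨A, H', by omega, by omega, by omega, hdvd', hrel.trans hrel'⟩

/-- The quadruple of curvature `n` given by the values of the form `A x² + 2 H x y + B y²` at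
`(x, y)`, `(z, t)` and `(x - z, y - t)`. -/
def basisQuad (n A H B x y z t : ℤ) : Fin 4 → ℤ :=
  ![n, A * x ^ 2 + 2 * H * x * y + B * y ^ 2 - n,
    A * z ^ 2 + 2 * H * z * t + B * t ^ 2 - n,
    A * (x - z) ^ 2 + 2 * H * (x - z) * (y - t) + B * (y - t) ^ 2 - n]

lemma S₄_mulVec_basisQuad (n A H B x y z t : ℤ) :
    S₄ *ᵥ basisQuad n A H B x y z t = basisQuad n A H B x y (-z) (-t) := by
  rw [S₄_mulVec]
  ext i
  fin_cases i <;> simp [basisQuad]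
  ring

lemma P₂₃_mulVec_basisQuad (n A H B x y z t : ℤ) :
    P₂₃ *ᵥ basisQuad n A H B x y z t = basisQuad n A H B z t x y := by
  rw [P₂₃_mulVec]
  ext i
  fin_cases i <;> simp [basisQuad]
  ring

lemma P₂₄_mulVec_basisQuad (n A H B x y z t : ℤ) :
    P₂₄ *ᵥ basisQuad n A H B x y z t = basisQuad n A H B (x - z) (y - t) (-z) (-t) := by
  rw [P₂₄_mulVec]
  ext i
  fin_cases i <;> simp [basisQuad]

lemma exists_eq_basisQuad_of_ap₁Rel {n A B H : ℤ} (hA : A ≠ 0) (h : A * B = H ^ 2 + n ^ 2)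
    {q : Fin 4 → ℤ} (hq : Ap₁Rel (rootQuad n A H) q) :
    ∃ x y z t : ℤ, IsUnit (x * t - y * z) ∧ q = basisQuad n A H B x y z t := by
  obtain ⟨M, hM, rfl⟩ := hq
  refine Ap₁_mulVec_induction
    (p := fun q => ∃ x y z t : ℤ, IsUnit (x * t - y * z) ∧ q = basisQuad n A H B x y z t)
    ?_ ?_ ?_ hM _ ⟨1, 0, 0, 1, by norm_num, ?_⟩
  · rintro q ⟨x, y, z, t, hdet, rfl⟩
    refine ⟨x, y, -z, -t, ?_, S₄_mulVec_basisQuad ..⟩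
    rw [show x * -t - y * -z = -(x * t - y * z) by ring]
    exact hdet.neg
  · rintro q ⟨x, y, z, t, hdet, rfl⟩
    refine ⟨z, t, x, y, ?_, P₂₃_mulVec_basisQuad ..⟩
    rw [show z * y - t * x = -(x * t - y * z) by ring]
    exact hdet.neg
  · rintro q ⟨x, y, z, t, hdet, rfl⟩
    refine ⟨x - z, y - t, -z, -t, ?_, P₂₄_mulVec_basisQuad ..⟩
    rw [show (x - z) * -t - (y - t) * -z = -(x * t - y * z) by ring]
    exact hdet.neg
  · rw [rootQuad_eq hA h]
    ext i
    fin_cases i <;> simp [basisQuad]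
    ring

/-- The product of `A` with the value of the form is `(A x + H y)² + n² y²`, which is at least `n²`
unless `y = 0`. -/
lemma eq_zero_or_eq_of_form_value_le {n A A' B H x y : ℤ} (hA : 0 < A) (hAn : A ≤ n)
    (hA' : 0 < A') (hAn' : A' ≤ n) (h : A * B = H ^ 2 + n ^ 2)
    (hval : A' = A * x ^ 2 + 2 * H * x * y + B * y ^ 2) :
    y = 0 ∨ A = n ∧ n ∣ H := by
  refine or_iff_not_imp_left.mpr fun hy => ?_
  have hn : 0 < n := hA.trans_le hAn
  have hprod : A * A' = (A * x + H * y) ^ 2 + n ^ 2 * y ^ 2 := by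
    linear_combination A * hval + y ^ 2 * h
  have hy_sq : 1 ≤ y ^ 2 := sq_pos_of_ne_zero hy
  have hle : A * A' ≤ n ^ 2 := by
    rw [pow_two]
    exact mul_le_mul hAn hAn' hA'.le hn.le
  have hge : n ^ 2 ≤ n ^ 2 * y ^ 2 := le_mul_of_one_le_right (sq_nonneg _) hy_sq
  have hsq_nonneg := sq_nonneg (A * x + H * y)
  have hlin : A * x + H * y = 0 := (pow_eq_zero_iff two_ne_zero).mp (by linarith)
  have hA_eq : A = n := by
    refine le_antisymm hAn (le_of_mul_le_mul_right ?_ hn)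
    linarith [mul_le_mul_of_nonneg_left hAn' hA.le]
  have hy_sq_eq : y ^ 2 = 1 :=
    le_antisymm (le_of_mul_le_mul_left (by linarith) (pow_pos hn 2)) hy_sq
  refine ⟨hA_eq, -x * y, ?_⟩
  linear_combination (-H) * hy_sq_eq + y * hlin - x * y * hA_eq

lemma not_isFormRoot_self_zero {n : ℕ} (hn : 2 ≤ n) : ¬ IsFormRoot n n 0 := by
  rintro ⟨-, hcop⟩
  rw [mul_zero, Nat.gcd_zero_right, zero_pow two_ne_zero, zero_add, pow_two,
    Nat.mul_div_cancel _ (by omega), Nat.coprime_self] at hcop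
  omega

lemma eq_of_eq_add_mul_isUnit {A H H' k t : ℤ} (hH : 0 ≤ H) (hHA : 2 * H ≤ A) (hH' : 0 ≤ H')
    (hHA' : 2 * H' ≤ A) (hA : 0 < A) (ht : IsUnit t) (h : H' = A * k + H * t) : H = H' := by
  rcases Int.isUnit_iff.mp ht with rfl | rfl
  · obtain rfl : k = 0 := by
      have hlb : -1 < k := by nlinarith
      have hub : k < 1 := by nlinarith
      omega
    linarith
  · have hlb : -1 < k := by nlinarith
    have hub : k < 2 := by nlinarith
    obtain rfl | rfl : k = 0 ∨ k = 1 := by omega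
    · omega
    · omega

lemma eq_of_ap₁Rel_rootQuad {n A H A' H' : ℕ} (hn : 2 ≤ n) (hA : 0 < A) (hAn : A ≤ n)
    (hH : 2 * H ≤ A) (hroot : IsFormRoot n A H) (hA' : 0 < A') (hAn' : A' ≤ n)
    (hH' : 2 * H' ≤ A') (hroot' : IsFormRoot n A' H')
    (hrel : Ap₁Rel (rootQuad n A H) (rootQuad n A' H')) : A = A' ∧ H = H' := by
  obtain ⟨B, hB⟩ := hroot.1
  obtain ⟨B', hB'⟩ := hroot'.1
  have hAB : (A : ℤ) * B = (H : ℤ) ^ 2 + (n : ℤ) ^ 2 := by exact_mod_cast hB.symm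
  have hAB' : (A' : ℤ) * B' = (H' : ℤ) ^ 2 + (n : ℤ) ^ 2 := by exact_mod_cast hB'.symm
  obtain ⟨x, y, z, t, hdet, hq⟩ := exists_eq_basisQuad_of_ap₁Rel (by omega) hAB hrel
  rw [rootQuad_eq (by omega) hAB', basisQuad] at hq
  have hq₁ := congrFun hq 1
  have hq₂ := congrFun hq 2
  have hq₃ := congrFun hq 3
  simp only [cons_val] at hq₁ hq₂ hq₃
  have hy : y = 0 := by
    refine (eq_zero_or_eq_of_form_value_le (by omega) (by omega) (by omega) (by omega) hAB
      (sub_left_inj.mp hq₁)).resolve_right fun ⟨hA_eq, hdvd⟩ => ?_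
    obtain rfl : A = n := by exact_mod_cast hA_eq
    obtain rfl : H = 0 := Nat.eq_zero_of_dvd_of_lt (Int.natCast_dvd_natCast.mp hdvd) (by omega)
    exact not_isFormRoot_self_zero hn hroot
  rw [hy, zero_mul, sub_zero] at hdet
  have hx_sq : x ^ 2 = 1 := Int.isUnit_sq (isUnit_of_mul_isUnit_left hdet)
  subst hy
  obtain rfl : A' = A := by
    zify
    linear_combination hq₁ + A * hx_sq
  refine ⟨rfl, ?_⟩
  have hH_eq : (H' : ℤ) = A' * (x * z) + H * (x * t) := by linarith
  exact_mod_cast eq_of_eq_add_mul_isUnit (by omega) (by omega) (by omega) (by omega) (by omega)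
    hdet hH_eq

/-! ### The minimal curvature of a packing -/

/-- A Descartes quadruple all of whose pair sums are nonnegative, as holds for the curvatures of
four mutually tangent circles of an Apollonian packing. -/
def IsPacked (q : Fin 4 → ℤ) : Prop :=
  (∑ i, q i) ^ 2 = 2 * ∑ i, q i ^ 2 ∧ ∀ i j, i ≠ j → 0 ≤ q i + q j

/-- Replaces the entry `q i` by the other solution of the Descartes equation. -/
def reflectAt (i : Fin 4) (q : Fin 4 → ℤ) : Fin 4 → ℤ :=
  Function.update q i (2 * ∑ j, q j - 3 * q i)

lemma reflectAt_self (i : Fin 4) (q : Fin 4 → ℤ) : reflectAt i q i = 2 * ∑ j, q j - 3 * q i :=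
  Function.update_self _ _ _

lemma reflectAt_of_ne {i j : Fin 4} (h : j ≠ i) (q : Fin 4 → ℤ) : reflectAt i q j = q j :=
  Function.update_of_ne h _ _

lemma sum_reflectAt (i : Fin 4) (q : Fin 4 → ℤ) :
    ∑ j, reflectAt i q j = 3 * ∑ j, q j - 4 * q i := by
  have hsum := Finset.sum_sdiff (f := q) (Finset.subset_univ {i})
  rw [Finset.sum_singleton] at hsum
  rw [reflectAt, Finset.sum_update_of_mem (Finset.mem_univ i)]
  linarith

lemma reflectAt_reflectAt (i : Fin 4) (q : Fin 4 → ℤ) : reflectAt i (reflectAt i q) = q := by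
  ext j
  obtain rfl | hj := eq_or_ne j i
  · rw [reflectAt_self, sum_reflectAt, reflectAt_self]
    ring
  · rw [reflectAt_of_ne hj, reflectAt_of_ne hj]

lemma reflectAt_comp (σ : Equiv.Perm (Fin 4)) (i : Fin 4) (q : Fin 4 → ℤ) :
    reflectAt i (q ∘ σ) = reflectAt (σ i) q ∘ σ := by
  have hsum : ∑ j, (q ∘ σ) j = ∑ j, q j := Equiv.sum_comp σ q
  ext j
  obtain rfl | hj := eq_or_ne j i
  · rw [reflectAt_self, Function.comp_apply, Function.comp_apply, reflectAt_self, hsum]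
  · rw [reflectAt_of_ne hj, Function.comp_apply, Function.comp_apply,
      reflectAt_of_ne (σ.injective.ne hj)]

lemma isPacked_of_forall_lt {q : Fin 4 → ℤ} (hdesc : (∑ i, q i) ^ 2 = 2 * ∑ i, q i ^ 2)
    (hpairs : ∀ i j, i < j → 0 ≤ q i + q j) : IsPacked q :=
  ⟨hdesc, fun i j hij => hij.lt_or_gt.elim (hpairs i j) fun h => add_comm (q i) _ ▸ hpairs j i h⟩

namespace IsPacked

variable {q : Fin 4 → ℤ}

lemma pairs (hq : IsPacked q) : 0 ≤ q 0 + q 1 ∧ 0 ≤ q 0 + q 2 ∧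
    0 ≤ q 0 + q 3 ∧ 0 ≤ q 1 + q 2 ∧ 0 ≤ q 1 + q 3 ∧ 0 ≤ q 2 + q 3 :=
  ⟨hq.2 0 1 (by decide), hq.2 0 2 (by decide), hq.2 0 3 (by decide), hq.2 1 2 (by decide),
    hq.2 1 3 (by decide), hq.2 2 3 (by decide)⟩

lemma le_reflectAt_of_nonpos (hq : IsPacked q) {i : Fin 4} (hi : q i ≤ 0) :
    q i ≤ reflectAt i q i := by
  rw [reflectAt_self, Fin.sum_univ_four]
  obtain ⟨h01, h02, h03, h12, h13, h23⟩ := hq.pairs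
  fin_cases i <;> simp only [Fin.zero_eta, Fin.mk_one, Fin.reduceFinMk] at * <;> linarith

lemma le_reflectAt_of_reflectAt_le (hq : IsPacked q) {i j : Fin 4} (hij : i ≠ j)
    (hi : reflectAt i q i ≤ q i) : q j ≤ reflectAt j q j := by
  rw [reflectAt_self] at *
  obtain ⟨h01, h02, h03, h12, h13, h23⟩ := hq.pairs
  rw [Fin.sum_univ_four] at *
  fin_cases i <;> fin_cases j <;> simp only [Fin.zero_eta, Fin.mk_one, Fin.reduceFinMk] at *
  all_goals first | exact absurd rfl hij | linarith

lemma comp (hq : IsPacked q) (σ : Equiv.Perm (Fin 4)) : IsPacked (q ∘ σ) := by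
  refine ⟨?_, fun i j h => hq.2 _ _ (σ.injective.ne h)⟩
  simp only [Function.comp_apply]
  rw [Equiv.sum_comp σ q, Equiv.sum_comp σ fun i => q i ^ 2]
  exact hq.1

lemma reflectAt_zero (hq : IsPacked q) : IsPacked (reflectAt 0 q) := by
  obtain ⟨-, -, -, h12, h13, h23⟩ := hq.pairs
  have hq₁ : reflectAt 0 q 1 = q 1 := rfl
  have hq₂ : reflectAt 0 q 2 = q 2 := rfl
  have hq₃ : reflectAt 0 q 3 = q 3 := rfl
  have hdesc : (∑ i, reflectAt 0 q i) ^ 2 = 2 * ∑ i, reflectAt 0 q i ^ 2 := by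
    have h := hq.1
    simp only [Fin.sum_univ_four, reflectAt, Function.update_self, ne_eq, Fin.reduceEq,
      not_false_eq_true, Function.update_of_ne] at h ⊢
    linear_combination h
  refine isPacked_of_forall_lt hdesc fun i j hij => ?_
  rw [Fin.sum_univ_four, Fin.sum_univ_four, hq₁, hq₂, hq₃] at hdesc
  have h01 : 0 ≤ q 1 + reflectAt 0 q 0 :=
    descartes_add_nonneg (n := q 1) (a := q 2) (b := q 3) (by linarith) h12 h13
  have h02 : 0 ≤ q 2 + reflectAt 0 q 0 :=
    descartes_add_nonneg (n := q 2) (a := q 1) (b := q 3) (by linarith) (by linarith) h23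
  have h03 : 0 ≤ q 3 + reflectAt 0 q 0 :=
    descartes_add_nonneg (n := q 3) (a := q 1) (b := q 2) (by linarith) (by linarith)
      (by linarith)
  fin_cases i <;> fin_cases j <;>
    simp only [Fin.zero_eta, Fin.mk_one, Fin.reduceFinMk, hq₁, hq₂, hq₃]
  all_goals first | exact absurd hij (by decide) | linarith

lemma reflectAt (hq : IsPacked q) (i : Fin 4) : IsPacked (reflectAt i q) := by
  have h := ((hq.comp (Equiv.swap 0 i)).reflectAt_zero).comp (Equiv.swap 0 i)
  rwa [reflectAt_comp, Equiv.swap_apply_left, Function.comp_assoc, ← Equiv.coe_trans,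
    Equiv.swap_swap, Equiv.coe_refl, Function.comp_id] at h

end IsPacked

/-- The quadruples obtained from a packed quadruple containing `a` by reflections that do not
decrease the reflected entry. For `a ≤ 0` these are all the quadruples of the packing, so `a` is its
minimal curvature. -/
inductive AscentFrom (a : ℤ) : (Fin 4 → ℤ) → Prop
  | base (q : Fin 4 → ℤ) (i : Fin 4) (hq : IsPacked q) (hi : q i = a) : AscentFrom a q
  | step (q : Fin 4 → ℤ) (i : Fin 4) (hq : AscentFrom a q) (hi : q i ≤ reflectAt i q i) :
    AscentFrom a (reflectAt i q)

namespace AscentFrom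

variable {a : ℤ} {q : Fin 4 → ℤ}

lemma isPacked (h : AscentFrom a q) : IsPacked q := by
  induction h with
  | base _ _ hq => exact hq
  | step _ i _ _ ih => exact ih.reflectAt i

lemma le (ha : a ≤ 0) (h : AscentFrom a q) (j : Fin 4) : a ≤ q j := by
  induction h generalizing j with
  | base q i hq hi =>
    obtain rfl | hij := eq_or_ne i j
    · exact hi.ge
    · linarith [hq.2 i j hij]
  | step q i _ hi ih =>
    obtain rfl | hij := eq_or_ne j i
    · exact (ih j).trans hi
    · rw [reflectAt_of_ne hij]
      exact ih j

lemma comp (h : AscentFrom a q) (σ : Equiv.Perm (Fin 4)) : AscentFrom a (q ∘ σ) := by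
  induction h with
  | base q i hq hi =>
    exact .base _ (σ.symm i) (hq.comp σ) (by rwa [Function.comp_apply, σ.apply_symm_apply])
  | step q i _ hi ih =>
    obtain ⟨j, rfl⟩ := σ.surjective i
    rw [← reflectAt_comp]
    refine .step _ _ ih ?_
    rwa [reflectAt_comp]

/-- If the last step was an ascent at `j`, the inverse of that step descends, so reflecting at any
`i ≠ j` ascends again. -/
lemma reflectAt (ha : a ≤ 0) (h : AscentFrom a q) (i : Fin 4) :
    AscentFrom a (reflectAt i q) := by
  induction h with
  | base q j hq hj =>
    obtain rfl | hji := eq_or_ne j i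
    · exact .step _ _ (.base q j hq hj) (hq.le_reflectAt_of_nonpos (hj ▸ ha))
    · exact .base _ j (hq.reflectAt i) (by rw [reflectAt_of_ne hji, hj])
  | step q j hq hj ih =>
    obtain rfl | hji := eq_or_ne j i
    · rwa [reflectAt_reflectAt]
    · have hstep := step q j hq hj
      refine .step _ _ hstep (hstep.isPacked.le_reflectAt_of_reflectAt_le hji ?_)
      rwa [reflectAt_reflectAt]

end AscentFrom

lemma S₁_mulVec (q : Fin 4 → ℤ) : S₁ *ᵥ q = reflectAt 0 q := by
  ext i
  fin_cases i <;> simp [S₁, mulVec, dotProduct, Fin.sum_univ_four, reflectAt]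
  ring

lemma S₂_mulVec (q : Fin 4 → ℤ) : S₂ *ᵥ q = reflectAt 1 q := by
  ext i
  fin_cases i <;> simp [S₂, mulVec, dotProduct, Fin.sum_univ_four, reflectAt]
  ring

lemma S₃_mulVec (q : Fin 4 → ℤ) : S₃ *ᵥ q = reflectAt 2 q := by
  ext i
  fin_cases i <;> simp [S₃, mulVec, dotProduct, Fin.sum_univ_four, reflectAt]
  ring

lemma S₄_mulVec_eq_reflectAt (q : Fin 4 → ℤ) : S₄ *ᵥ q = reflectAt 3 q := by
  ext i
  fin_cases i <;> simp [S₄, mulVec, dotProduct, Fin.sum_univ_four, reflectAt]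
  ring

lemma AscentFrom.mulVec {a : ℤ} (ha : a ≤ 0) {M : Matrix (Fin 4) (Fin 4) ℤ} (hM : M ∈ Apfull) :
    ∀ q, AscentFrom a q → AscentFrom a (M *ᵥ q) := by
  induction hM using Submonoid.closure_induction with
  | mem M hM =>
    intro q hq
    rcases hM with (rfl | rfl | rfl | rfl) | ⟨σ, rfl⟩
    · rw [S₁_mulVec]; exact hq.reflectAt ha 0
    · rw [S₂_mulVec]; exact hq.reflectAt ha 1
    · rw [S₃_mulVec]; exact hq.reflectAt ha 2
    · rw [S₄_mulVec_eq_reflectAt]; exact hq.reflectAt ha 3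
    · rw [permMatrix_mulVec]; exact hq.comp σ
  | one => simp only [one_mulVec, imp_self, implies_true]
  | mul M N _ _ hM hN =>
    intro q hq
    rw [← mulVec_mulVec]
    exact hM _ (hN _ hq)

lemma permMatrix_mem_Apfull (σ : Equiv.Perm (Fin 4)) : σ.permMatrix ℤ ∈ Apfull :=
  Submonoid.subset_closure (.inr ⟨σ, rfl⟩)

lemma Ap₁_le_Apfull : Ap₁ ≤ Apfull := by
  refine Submonoid.closure_mono ?_
  rintro M (rfl | rfl | rfl)
  · exact .inr ⟨Equiv.swap 1 2, by decide⟩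
  · exact .inr ⟨Equiv.swap 1 3, by decide⟩
  · simp

lemma MC_eq_neg_of_nonpos {q q' : Fin 4 → ℤ} (hq : IsPacked q) {i : Fin 4} (hi : q i ≤ 0)
    (hrel : Ap₁Rel q q') : MC q' = -((q i : ℤ) : ℝ) := by
  refine IsGreatest.csSup_eq ⟨?_, ?_⟩
  · obtain ⟨N, hN, rfl⟩ := hrel.symm
    refine ⟨(Equiv.swap 0 i).permMatrix ℤ * N,
      mul_mem (permMatrix_mem_Apfull _) (Ap₁_le_Apfull hN), ?_⟩
    rw [← mulVec_mulVec, permMatrix_mulVec, Function.comp_apply, Equiv.swap_apply_left]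
  · rintro _ ⟨M, hM, rfl⟩
    obtain ⟨N, hN, rfl⟩ := hrel
    have hascent : AscentFrom (q i) (M *ᵥ N *ᵥ q) :=
      .mulVec hi hM _ (.mulVec hi (Ap₁_le_Apfull hN) _ (.base q i hq rfl))
    exact neg_le_neg (by exact_mod_cast hascent.le hi 0)

lemma descartes_add_nonneg_of_nonneg {n a b c : ℤ}
    (h : (n + a + b + c) ^ 2 = 2 * (n ^ 2 + a ^ 2 + b ^ 2 + c ^ 2)) (hn : 0 ≤ n)
    (ha : 0 ≤ n + a) (hb : 0 ≤ n + b) : 0 ≤ a + b := by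
  have hprod : n ^ 2 ≤ (n + a) * (n + b) := by
    nlinarith [sq_nonneg (n + a + b - c)]
  by_contra! hneg
  nlinarith [sq_nonneg (a - b)]

lemma isPacked_of_mem_DSet {n : ℤ} (hn : 0 ≤ n) {q : Fin 4 → ℤ} (hq : q ∈ DSet n) :
    IsPacked q := by
  obtain ⟨rfl, -, hdesc, h01, h02⟩ := hq
  have h03 := descartes_add_nonneg hdesc h01 h02
  have h12 := descartes_add_nonneg_of_nonneg hdesc hn h01 h02
  have h13 := descartes_add_nonneg_of_nonneg (c := q 2) (by linarith) hn h01 h03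
  have h23 := descartes_add_nonneg_of_nonneg (c := q 1) (by linarith) hn h02 h03
  refine isPacked_of_forall_lt (by simpa only [Fin.sum_univ_four] using hdesc) fun i j hij => ?_
  fin_cases i <;> fin_cases j <;> simp only [Fin.zero_eta, Fin.mk_one, Fin.reduceFinMk]
  all_goals first | exact absurd hij (by decide) | assumption

/-! ### Counting the orbits -/

/-- The pairs `(A, H)` of reduced form roots of `n`; they parametrize `ID₀ n`. -/
noncomputable def reducedRoots (n : ℕ) : Finset (Σ _ : ℕ, ℕ) :=
  (Finset.Ioc 0 n).sigma fun A => halfRoots n A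

/-- The `Ap₁`-orbit of the quadruple attached to a pair `(A, H)`. -/
def rootClass (n : ℕ) (x : Σ _ : ℕ, ℕ) : Set (Fin 4 → ℤ) :=
  {q | Ap₁Rel (rootQuad n x.1 x.2) q}

section

variable {n : ℕ} {x : Σ _ : ℕ, ℕ}

lemma mem_reducedRoots :
    x ∈ reducedRoots n ↔ (0 < x.1 ∧ x.1 ≤ n) ∧ 2 * x.2 ≤ x.1 ∧ IsFormRoot n x.1 x.2 := by
  rw [reducedRoots, Finset.mem_sigma, Finset.mem_Ioc, mem_halfRoots]

lemma rootQuad_mem_DSet (hx : x ∈ reducedRoots n) : rootQuad n x.1 x.2 ∈ DSet n := by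
  rw [mem_reducedRoots] at hx
  exact (rootQuad_mem_DSet_iff hx.1.1 hx.2.2.1).mpr hx.2.2

lemma rootQuad_one_nonpos (hx : x ∈ reducedRoots n) : rootQuad n x.1 x.2 1 ≤ 0 :=
  sub_nonpos.mpr (Int.ofNat_le.mpr (mem_reducedRoots.mp hx).1.2)

lemma rootClass_mem_ID₀ (hx : x ∈ reducedRoots n) : rootClass n x ∈ ID₀ n :=
  ⟨⟨_, rootQuad_mem_DSet hx, rfl⟩, _, .refl _, 1, rootQuad_one_nonpos hx⟩

lemma exists_rootClass_eq (hn : 0 < n) {O : Set (Fin 4 → ℤ)} (hO : O ∈ ID₀ n) :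
    ∃ x ∈ reducedRoots n, rootClass n x = O := by
  obtain ⟨⟨q, hq, rfl⟩, q', ⟨M, hM, rfl⟩, i, hi⟩ := hO
  obtain ⟨A, H, hA, hAn, hH, hdvd, hrel⟩ :=
    exists_ap₁Rel_rootQuad (Int.natCast_pos.mpr hn) (mulVec_mem_DSet hM q hq) hi
  replace hrel : Ap₁Rel q (rootQuad n A H) := Ap₁Rel.trans ⟨M, hM, rfl⟩ hrel
  have hmem : rootQuad n A H ∈ DSet n := by
    obtain ⟨N, hN, hNq⟩ := hrel
    rw [hNq]
    exact mulVec_mem_DSet hN q hq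
  have hroot := (rootQuad_mem_DSet_iff hA (by exact_mod_cast hdvd)).mp hmem
  exact ⟨⟨A, H⟩, mem_reducedRoots.mpr ⟨⟨hA, by exact_mod_cast hAn⟩, hH, hroot⟩, hrel.setOf_eq.symm⟩

lemma image_rootClass (hn : 0 < n) : rootClass n '' reducedRoots n = ID₀ n :=
  Set.Subset.antisymm (Set.image_subset_iff.mpr fun _ => rootClass_mem_ID₀)
    fun _ => exists_rootClass_eq hn

lemma injOn_rootClass (hn : 2 ≤ n) : Set.InjOn (rootClass n) (reducedRoots n) := by
  rintro ⟨A, H⟩ hx ⟨A', H'⟩ hx' heq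
  have hrel : rootQuad n A' H' ∈ rootClass n ⟨A, H⟩ := heq ▸ Ap₁Rel.refl _
  obtain ⟨⟨hA, hAn⟩, hH, hroot⟩ := mem_reducedRoots.mp hx
  obtain ⟨⟨hA', hAn'⟩, hH', hroot'⟩ := mem_reducedRoots.mp hx'
  obtain ⟨rfl, rfl⟩ := eq_of_ap₁Rel_rootQuad hn hA hAn hH hroot hA' hAn' hH' hroot' hrel
  rfl

lemma MC_eq_sub_of_mem_rootClass (hx : x ∈ reducedRoots n) {q : Fin 4 → ℤ}
    (hq : q ∈ rootClass n x) : MC q = n - x.1 := by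
  rw [MC_eq_neg_of_nonpos (isPacked_of_mem_DSet (Int.natCast_nonneg n) (rootQuad_mem_DSet hx))
    (rootQuad_one_nonpos hx) hq, show rootQuad n x.1 x.2 1 = x.1 - n from rfl]
  push_cast
  exact neg_sub _ _

lemma setOf_MC_le_eq_image_rootClass (hn : 0 < n) (r : ℝ) :
    {O ∈ ID₀ n | ∃ q ∈ O, MC q ≤ r} =
      rootClass n '' ((reducedRoots n).filter fun x => (n : ℝ) - x.1 ≤ r) := by
  rw [← image_rootClass hn]
  ext O
  simp only [Set.mem_ofPred_eq, Set.mem_image, Finset.mem_coe, Finset.mem_filter]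
  constructor
  · rintro ⟨⟨x, hx, rfl⟩, q, hq, hMC⟩
    exact ⟨x, ⟨hx, MC_eq_sub_of_mem_rootClass hx hq ▸ hMC⟩, rfl⟩
  · rintro ⟨x, ⟨hx, hr⟩, rfl⟩
    exact ⟨⟨x, hx, rfl⟩, _, .refl _, (MC_eq_sub_of_mem_rootClass hx (.refl _)).trans_le hr⟩

lemma ncard_ID₀ (hn : 2 ≤ n) : (ID₀ n).ncard = ∑ A ∈ Finset.Ioc 0 n, (halfRoots n A).card := by
  rw [← image_rootClass (by omega), (injOn_rootClass hn).ncard_image, Set.ncard_coe_finset,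
    reducedRoots, Finset.card_sigma]

lemma ncard_setOf_MC_le (hn : 2 ≤ n) (r : ℝ) :
    {O ∈ ID₀ n | ∃ q ∈ O, MC q ≤ r}.ncard =
      ∑ A ∈ (Finset.Ioc 0 n).filter (fun A : ℕ => (n : ℝ) - A ≤ r), (halfRoots n A).card := by
  rw [setOf_MC_le_eq_image_rootClass (by omega), ((injOn_rootClass hn).mono
    (Finset.coe_subset.mpr (Finset.filter_subset _ _))).ncard_image, Set.ncard_coe_finset,
    ← Finset.card_sigma]
  congr 1
  ext x
  simp only [reducedRoots, Finset.mem_filter, Finset.mem_sigma]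
  tauto

end

/-- As `n → ∞`, the heights `MC(q)/n` of the classes in `ID₀(n)` equidistribute
uniformly on `[0, 1]`: for fixed `s ∈ [0,1]`, the proportion of classes of
`ID₀(n)` with `MC(q) ≤ s·n` tends to `s`. -/
theorem apollonian_bottom_stair_heights_equidistribute
    (s : ℝ) (hs0 : 0 ≤ s) (hs1 : s ≤ 1) :
    Filter.Tendsto
      (fun n : ℕ =>
        (({O ∈ ID₀ (n : ℤ) | ∃ q ∈ O, MC q ≤ s * (n : ℝ)}).ncard : ℝ) /
          ((ID₀ (n : ℤ)).ncard : ℝ))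
      Filter.atTop (nhds s) := by
  refine (tendsto_sum_card_halfRoots_div hs0 hs1).congr' ?_
  filter_upwards [Filter.eventually_ge_atTop 2] with n hn
  rw [ncard_ID₀ hn, ncard_setOf_MC_le hn]
  push_cast
  rfl
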